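/- Let c_1, ..., c_{n-1} be points (not necessarily distinct) in the open unit disk 𝔻. Then there exists a finite Blaschke product B of degree n whose derivative B' vanishes in 𝔻 exactly at the points c_1, ..., c_{n-1}, counted with multiplicity (and B' has no other zeros in 𝔻). -/

import Mathlib

open Metric Filter

/-- The order of vanishing of `f` at `z`: the least `n` such that the `n`-th
derivative of `f` at `z` is nonzero (`⊤` if all derivatives vanish). -/
noncomputable def vOrder (f : ℂ → ℂ) (z : ℂ) : ℕ∞ :=
  sInf ((fun n : ℕ => (n : ℕ∞)) '' {n : ℕ | iteratedDeriv n f z ≠ 0})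

/-!
For a polynomial `f` of degree at most `n` without zeros in the closed disk, with conjugate
reciprocal `f*` of degree `n + 1`, the function `f* / f` is a Blaschke product of degree `n + 1`
with a zero at the origin. The numerator of its derivative is the Wronskian of `f` and `f*`, which
is determined by its profile on the unit circle; the critical points are `b j` when the profile is
`∏ j, ‖z - b j‖ ^ 2`. The set of configurations `b` that occur is nonempty, open and closed in the
polydisc. It contains `b = 0`, realized by `z ^ (n + 1)`. It is closed because the zeros range over
a compact polydisc and a zero reaching the circle would make the profile vanish there. It is open
by the inverse function theorem: if the first variation `g` of `f` leaves the Wronskian unchanged,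
then `2 Re ⟨(f, f*), (g, g*)⟩ / (‖f‖ ^ 2 - ‖f*‖ ^ 2)`, for the Hermitian form of signature
`(1, 1)`, solves the linearized Liouville equation and vanishes on the circle, hence vanishes by
the maximum principle, and polarization then gives `g = 0`.
-/

section Heins

open Topology ComplexConjugate Polynomial

section SecondOrderTests

lemma nonneg_of_isLocalMin_of_hasDerivAt {h h' : ℝ → ℝ} {h'' t : ℝ} (hmin : IsLocalMin h t)
    (hh : ∀ᶠ s in 𝓝 t, HasDerivAt h (h' s) s) (hh' : HasDerivAt h' h'' t) : 0 ≤ h'' := by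
  have hderiv : deriv h =ᶠ[𝓝 t] h' := hh.mono fun s hs => hs.deriv
  have hderiv₂ : deriv (deriv h) t = h'' := hderiv.deriv_eq.trans hh'.deriv
  by_contra! hneg
  have hmax : IsLocalMax h t :=
    isLocalMax_of_deriv_deriv_neg (hderiv₂.trans_lt hneg) hmin.deriv_eq_zero
      hh.self_of_nhds.continuousAt
  have hconst : h =ᶠ[𝓝 t] fun _ => h t := by
    filter_upwards [hmin, hmax] with s h₁ h₂ using le_antisymm h₂ h₁
  have : deriv (deriv h) t = 0 := by simp [hconst.deriv.deriv_eq]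
  linarith

variable {ι : Type*} [Fintype ι] {f g : ι → ℂ → ℂ} {p : ℂ}

lemma hasDerivAt_line (p v : ℂ) (s : ℝ) : HasDerivAt (fun s : ℝ => p + s * v) v s := by
  simpa using (Complex.ofRealCLM.hasDerivAt.mul_const v).const_add p

lemma hasDerivAt_conj_mul_comp_line {f g : ℂ → ℂ} {f' g' p v : ℂ} {s : ℝ}
    (hf : HasDerivAt f f' (p + s * v)) (hg : HasDerivAt g g' (p + s * v)) :
    HasDerivAt (fun s : ℝ => conj (f (p + s * v)) * g (p + s * v))
      (conj (f' * v) * g (p + s * v) + conj (f (p + s * v)) * (g' * v)) s :=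
  (hf.comp s (hasDerivAt_line p v s)).star.mul (hg.comp s (hasDerivAt_line p v s))

lemma hasDerivAt_sum_conj_mul_comp_line {v : ℂ} {s : ℝ}
    (hf : ∀ i, DifferentiableAt ℂ (f i) (p + s * v))
    (hg : ∀ i, DifferentiableAt ℂ (g i) (p + s * v)) :
    HasDerivAt (fun s : ℝ => ∑ i, conj (f i (p + s * v)) * g i (p + s * v))
      (∑ i, (conj (deriv (f i) (p + s * v) * v) * g i (p + s * v)
        + conj (f i (p + s * v)) * (deriv (g i) (p + s * v) * v))) s :=
  HasDerivAt.fun_sum fun i _ =>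
    hasDerivAt_conj_mul_comp_line (hf i).hasDerivAt (hg i).hasDerivAt

lemma hasDerivAt_re {F : ℝ → ℂ} {F' : ℂ} {s : ℝ} (hF : HasDerivAt F F' s) :
    HasDerivAt (fun s => (F s).re) F'.re s :=
  Complex.reCLM.hasFDerivAt.comp_hasDerivAt s hF

lemma tendsto_line (p v : ℂ) : Tendsto (fun s : ℝ => p + s * v) (𝓝 0) (𝓝 p) :=
  Continuous.tendsto' (by fun_prop) _ _ (by simp)

lemma isLocalMin_comp_line {F : ℂ → ℝ} (hmin : IsLocalMin F p) (v : ℂ) :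
    IsLocalMin (fun s : ℝ => F (p + s * v)) 0 := by
  filter_upwards [(tendsto_line p v).eventually hmin] with s hs
  simpa using hs

lemma sum_deriv_eq_zero_of_isLocalMin (hf : ∀ i, DifferentiableAt ℂ (f i) p)
    (hg : ∀ i, DifferentiableAt ℂ (g i) p)
    (hmin : IsLocalMin (fun z => (∑ i, conj (f i z) * g i z).re) p) :
    ∑ i, (deriv (f i) p * conj (g i p) + conj (f i p) * deriv (g i) p) = 0 := by
  have hline (v : ℂ) :
      (v * ∑ i, (deriv (f i) p * conj (g i p) + conj (f i p) * deriv (g i) p)).re = 0 := by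
    have hd := hasDerivAt_re (hasDerivAt_sum_conj_mul_comp_line (f := f) (g := g) (p := p) (v := v)
      (s := 0) (by simpa using hf) (by simpa using hg))
    rw [← (isLocalMin_comp_line hmin v).hasDerivAt_eq_zero hd, Finset.mul_sum, Complex.re_sum,
      Complex.re_sum]
    refine Finset.sum_congr rfl fun i _ => ?_
    simp only [Complex.ofReal_zero, zero_mul, add_zero, Complex.add_re, Complex.mul_re,
      Complex.conj_re, Complex.conj_im, Complex.mul_im, Complex.add_im]
    ring
  apply Complex.ext
  · simpa using hline 1
  · simpa using hline Complex.I

lemma nonneg_sum_second_deriv_of_isLocalMin (hf : ∀ i, AnalyticAt ℂ (f i) p)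
    (hg : ∀ i, AnalyticAt ℂ (g i) p)
    (hmin : IsLocalMin (fun z => (∑ i, conj (f i z) * g i z).re) p) (v : ℂ) :
    0 ≤ (∑ i, (conj (deriv (deriv (f i)) p * v ^ 2) * g i p
      + 2 * (conj (deriv (f i) p * v) * (deriv (g i) p * v))
      + conj (f i p) * (deriv (deriv (g i)) p * v ^ 2))).re := by
  have hev : ∀ᶠ z in 𝓝 p, ∀ i, AnalyticAt ℂ (f i) z ∧ AnalyticAt ℂ (g i) z :=
    eventually_all.2 fun i => (hf i).eventually_analyticAt.and (hg i).eventually_analyticAt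
  refine nonneg_of_isLocalMin_of_hasDerivAt (isLocalMin_comp_line hmin v)
    (((tendsto_line p v).eventually hev).mono fun s hs => hasDerivAt_re
      (hasDerivAt_sum_conj_mul_comp_line (fun i => (hs i).1.differentiableAt)
        fun i => (hs i).2.differentiableAt))
    (hasDerivAt_re (HasDerivAt.fun_sum fun i _ => ?_))
  have hp : p + (0 : ℝ) * v = p := by simp
  have hf₀ := (hf i).differentiableAt.hasDerivAt
  have hf₁ := (hf i).deriv.differentiableAt.hasDerivAt.mul_const v
  have hg₀ := (hg i).differentiableAt.hasDerivAt
  have hg₁ := (hg i).deriv.differentiableAt.hasDerivAt.mul_const v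
  rw [← hp] at hf₀ hf₁ hg₀ hg₁
  refine ((hasDerivAt_conj_mul_comp_line hf₁ hg₀).fun_add
    (hasDerivAt_conj_mul_comp_line hf₀ hg₁)).congr_deriv ?_
  simp only [hp, map_mul, map_pow]
  ring

/- Summing over the directions `1` and `I` leaves the Laplacian, in which the second derivatives
of the analytic functions cancel. -/
lemma nonneg_sum_conj_deriv_mul_deriv_of_isLocalMin (hf : ∀ i, AnalyticAt ℂ (f i) p)
    (hg : ∀ i, AnalyticAt ℂ (g i) p)
    (hmin : IsLocalMin (fun z => (∑ i, conj (f i z) * g i z).re) p) :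
    0 ≤ (∑ i, conj (deriv (f i) p) * deriv (g i) p).re := by
  have h₁ := nonneg_sum_second_deriv_of_isLocalMin hf hg hmin 1
  have hI := nonneg_sum_second_deriv_of_isLocalMin hf hg hmin Complex.I
  have hsum := add_nonneg h₁ hI
  rw [← Complex.add_re, ← Finset.sum_add_distrib] at hsum
  suffices 0 ≤ (((4 : ℝ) : ℂ) * ∑ i, conj (deriv (f i) p) * deriv (g i) p).re by
    rwa [Complex.re_ofReal_mul, mul_nonneg_iff_of_pos_left (by norm_num)] at this
  refine hsum.trans_eq (congrArg Complex.re ?_)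
  rw [Finset.mul_sum]
  refine Finset.sum_congr rfl fun i _ => ?_
  simp only [map_mul, Complex.conj_I, Complex.I_sq, map_pow, map_one, map_neg, Complex.ofReal_ofNat]
  linear_combination (-2 * conj (deriv (f i) p) * deriv (g i) p) * Complex.I_sq

end SecondOrderTests

section Polarization

variable {ι : Type*} [Fintype ι] {f g : ι → ℂ → ℂ} {U : Set ℂ}

lemma sum_conj_mul_deriv_eq_zero (hU : IsOpen U) (hf : ∀ i, DifferentiableOn ℂ (f i) U)
    (hg : ∀ i, DifferentiableOn ℂ (g i) U) (h : ∀ z ∈ U, ∑ i, conj (f i z) * g i z = 0) {z : ℂ}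
    (hz : z ∈ U) : ∑ i, conj (f i z) * deriv (g i) z = 0 := by
  have hline (v : ℂ) : conj v * ∑ i, conj (deriv (f i) z) * g i z
      + v * ∑ i, conj (f i z) * deriv (g i) z = 0 := by
    have hd := hasDerivAt_sum_conj_mul_comp_line (f := f) (g := g) (p := z) (v := v) (s := 0)
      (fun i => by simpa using (hf i).differentiableAt (hU.mem_nhds hz))
      (fun i => by simpa using (hg i).differentiableAt (hU.mem_nhds hz))
    have hzero : (fun s : ℝ => ∑ i, conj (f i (z + s * v)) * g i (z + s * v)) =ᶠ[𝓝 0] 0 :=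
      ((tendsto_line z v).eventually (hU.mem_nhds hz)).mono fun s hs => h _ hs
    have := hd.unique ((hasDerivAt_const (0 : ℝ) (0 : ℂ)).congr_of_eventuallyEq hzero)
    rw [← this, Finset.mul_sum, Finset.mul_sum, ← Finset.sum_add_distrib]
    refine Finset.sum_congr rfl fun i _ => ?_
    simp only [Complex.ofReal_zero, zero_mul, add_zero, map_mul]
    ring
  have h₁ := hline 1
  have hI := hline Complex.I
  simp only [map_one, one_mul, Complex.conj_I] at h₁ hI
  linear_combination (1 / 2 : ℂ) * h₁ - Complex.I / 2 * hI
    - (1 / 2) * ((∑ i, conj (deriv (f i) z) * g i z) - ∑ i, conj (f i z) * deriv (g i) z)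
      * Complex.I_sq

lemma sum_conj_mul_iteratedDeriv_eq_zero (hU : IsOpen U) (hf : ∀ i, DifferentiableOn ℂ (f i) U)
    (hg : ∀ i, DifferentiableOn ℂ (g i) U) (h : ∀ z ∈ U, ∑ i, conj (f i z) * g i z = 0) {z : ℂ}
    (hz : z ∈ U) (k : ℕ) : ∑ i, conj (f i z) * iteratedDeriv k (g i) z = 0 := by
  have hdiff (k : ℕ) (i : ι) : DifferentiableOn ℂ (iteratedDeriv k (g i)) U := by
    induction k with
    | zero => simpa using hg i
    | succ k ih => simpa [iteratedDeriv_succ] using ih.deriv hU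
  induction k generalizing z with
  | zero => simpa using h z hz
  | succ k ih =>
    simpa only [iteratedDeriv_succ] using
      sum_conj_mul_deriv_eq_zero hU hf (hdiff k) (fun z => ih) hz

theorem sum_conj_mul_eq_zero_of_diagonal (hU : IsOpen U) (hUc : IsPreconnected U)
    (hf : ∀ i, DifferentiableOn ℂ (f i) U) (hg : ∀ i, DifferentiableOn ℂ (g i) U)
    (h : ∀ z ∈ U, ∑ i, conj (f i z) * g i z = 0) {w z : ℂ} (hw : w ∈ U) (hz : z ∈ U) :
    ∑ i, conj (f i w) * g i z = 0 := by
  have hG : AnalyticOnNhd ℂ (fun z => ∑ i, conj (f i w) * g i z) U :=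
    DifferentiableOn.analyticOnNhd
      (DifferentiableOn.fun_sum fun i _ => (hg i).const_mul (conj (f i w))) hU
  refine hG.eqOn_zero_of_preconnected_of_eventuallyEq_zero hUc hw ?_ hz
  refine analyticOrderAt_eq_top.1 (ENat.eq_top_iff_forall_ge.2 fun m => ?_)
  rw [natCast_le_analyticOrderAt_iff_iteratedDeriv_eq_zero (hG w hw)]
  intro k _
  have hsmooth (i : ι) : ContDiffAt ℂ k (g i) w :=
    (DifferentiableOn.analyticAt (hg i) (hU.mem_nhds hw)).contDiffAt
  rw [iteratedDeriv_fun_sum fun i _ => contDiffAt_const.mul (hsmooth i)]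
  simpa only [iteratedDeriv_const_mul_field] using
    sum_conj_mul_iteratedDeriv_eq_zero hU hf hg h hw k

end Polarization

section MaximumPrinciple

/-- The Hermitian form of signature `(1, 1)` on `ℂ²`, antilinear in the first variable. A pair of
functions on which it is positive represents a map into the unit disk, namely their quotient. -/
def hermForm (x y : ℂ × ℂ) : ℂ := conj x.1 * y.1 - conj x.2 * y.2

/-- The determinant of two vectors of `ℂ²`, so that `wedge (f, g) (f', g')` is the Wronskian. -/
def wedge (x y : ℂ × ℂ) : ℂ := x.1 * y.2 - x.2 * y.1

lemma conj_hermForm (x y : ℂ × ℂ) : conj (hermForm x y) = hermForm y x := by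
  simp [hermForm, mul_comm]

lemma hermForm_self (x : ℂ × ℂ) : hermForm x x = (‖x.1‖ ^ 2 - ‖x.2‖ ^ 2 : ℝ) := by
  simp [hermForm, Complex.conj_mul']

lemma hermForm_mul_sub_hermForm_mul (x y u v : ℂ × ℂ) :
    hermForm x u * hermForm y v - hermForm x v * hermForm y u
      = -(conj (wedge x y) * wedge u v) := by
  simp only [hermForm, wedge, map_sub, map_mul]
  ring

lemma re_hermForm_self_mul_second_variation {u u' q q' : ℂ × ℂ} {z : ℂ} {t ε : ℝ}
    (h₀ : t * (hermForm u u).re + 2 * (hermForm u q).re = 0)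
    (h₁ : t * hermForm u u' + hermForm u q' + hermForm q u' = ε * conj z * hermForm u u)
    (hw : wedge u q' + wedge q u' = 0) :
    (hermForm u u).re * (t * hermForm u' u' + 2 * hermForm u' q'
        - ε * (hermForm u u + z * hermForm u u' + conj z * hermForm u' u)).re
      = -2 * t * ‖wedge u u'‖ ^ 2 - ε * (hermForm u u).re ^ 2 := by
  have key : hermForm u u * hermForm u' q' = ε * conj z * hermForm u' u * hermForm u u
      - t * (hermForm u' u * hermForm u u') - hermForm u' u * hermForm q u'
      + hermForm u u' * hermForm u' q - hermForm u q * hermForm u' u' := by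
    linear_combination hermForm_mul_sub_hermForm_mul u u' u q'
      + hermForm_mul_sub_hermForm_mul u u' q u' + hermForm u' u * h₁ - conj (wedge u u') * hw
  have hnorm := hermForm_mul_sub_hermForm_mul u u' u u'
  rw [Complex.conj_mul', ← Complex.ofReal_pow] at hnorm
  simp only [hermForm_self, ← conj_hermForm u u', ← conj_hermForm q u'] at key hnorm h₀ ⊢
  have hkey := congrArg Complex.re key
  have hnorm := congrArg Complex.re hnorm
  simp only [Complex.mul_re, Complex.sub_re, Complex.add_re, Complex.conj_re, Complex.conj_im,
    Complex.ofReal_re, Complex.ofReal_im, Complex.mul_im, Complex.neg_re, Complex.re_ofNat,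
    Complex.im_ofNat] at hkey hnorm h₀ ⊢
  linear_combination 2 * hkey + 2 * t * hnorm - (‖u'.1‖ ^ 2 - ‖u'.2‖ ^ 2) * h₀

variable {u v : ℂ → ℂ × ℂ} {z₀ : ℂ}

/-- With `perturbationRight`, the functions `F` and `H` for which `Re ∑ i, conj (F i) * H i` is
`(κ - ε ‖z‖ ^ 2) ⟨u, u⟩ + 2 Re ⟨u, v⟩`. -/
def perturbationLeft (u : ℂ → ℂ × ℂ) : Fin 4 → ℂ → ℂ :=
  ![fun z => (u z).1, fun z => (u z).2, fun z => z * (u z).1, fun z => z * (u z).2]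

/-- The functions `H` that go with the functions `F` of `perturbationLeft`. -/
def perturbationRight (κ ε : ℝ) (u v : ℂ → ℂ × ℂ) : Fin 4 → ℂ → ℂ :=
  ![fun z => κ * (u z).1 + 2 * (v z).1, fun z => -(κ * (u z).2 + 2 * (v z).2),
    fun z => -(ε * (z * (u z).1)), fun z => ε * (z * (u z).2)]

lemma re_sum_conj_perturbationLeft_mul (κ ε : ℝ) (u v : ℂ → ℂ × ℂ) (z : ℂ) :
    (∑ i, conj (perturbationLeft u i z) * perturbationRight κ ε u v i z).re
      = (κ - ε * ‖z‖ ^ 2) * (hermForm (u z) (u z)).re + 2 * (hermForm (u z) (v z)).re := by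
  have hz : conj z * z = ‖z‖ ^ 2 := Complex.conj_mul' z
  rw [← Complex.re_ofReal_mul, ← Complex.re_ofReal_mul, ← Complex.add_re]
  congr 1
  simp only [Fin.sum_univ_four, perturbationLeft, perturbationRight, hermForm, Matrix.cons_val,
    map_mul]
  push_cast
  linear_combination ε * (conj (u z).2 * (u z).2 - conj (u z).1 * (u z).1) * hz

lemma analyticAt_perturbationLeft (hu : AnalyticAt ℂ u z₀) (i : Fin 4) :
    AnalyticAt ℂ (perturbationLeft u i) z₀ := by
  have h₁ : AnalyticAt ℂ (fun z => (u z).1) z₀ := analyticAt_fst.comp hu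
  have h₂ : AnalyticAt ℂ (fun z => (u z).2) z₀ := analyticAt_snd.comp hu
  fin_cases i
  exacts [h₁, h₂, analyticAt_id.mul h₁, analyticAt_id.mul h₂]

lemma analyticAt_perturbationRight (κ ε : ℝ) (hu : AnalyticAt ℂ u z₀) (hv : AnalyticAt ℂ v z₀)
    (i : Fin 4) : AnalyticAt ℂ (perturbationRight κ ε u v i) z₀ := by
  have h₁ : AnalyticAt ℂ (fun z => (u z).1) z₀ := analyticAt_fst.comp hu
  have h₂ : AnalyticAt ℂ (fun z => (u z).2) z₀ := analyticAt_snd.comp hu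
  have k₁ : AnalyticAt ℂ (fun z => (v z).1) z₀ := analyticAt_fst.comp hv
  have k₂ : AnalyticAt ℂ (fun z => (v z).2) z₀ := analyticAt_snd.comp hv
  fin_cases i <;> simp only [perturbationRight] <;> dsimp <;> fun_prop

lemma deriv_perturbationLeft (hu : DifferentiableAt ℂ u z₀) (i : Fin 4) :
    deriv (perturbationLeft u i) z₀ =
      (![(deriv u z₀).1, (deriv u z₀).2, (u z₀).1 + z₀ * (deriv u z₀).1,
        (u z₀).2 + z₀ * (deriv u z₀).2] : Fin 4 → ℂ) i := by
  have h₁ : HasDerivAt (fun z => (u z).1) (deriv u z₀).1 z₀ := hu.hasDerivAt.fst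
  have h₂ : HasDerivAt (fun z => (u z).2) (deriv u z₀).2 z₀ := hu.hasDerivAt.snd
  have m₁ : HasDerivAt (fun z => z * (u z).1) ((u z₀).1 + z₀ * (deriv u z₀).1) z₀ := by
    simpa using (hasDerivAt_id' z₀).fun_mul h₁
  have m₂ : HasDerivAt (fun z => z * (u z).2) ((u z₀).2 + z₀ * (deriv u z₀).2) z₀ := by
    simpa using (hasDerivAt_id' z₀).fun_mul h₂
  fin_cases i
  exacts [h₁.deriv, h₂.deriv, m₁.deriv, m₂.deriv]

lemma deriv_perturbationRight (κ ε : ℝ) (hu : DifferentiableAt ℂ u z₀)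
    (hv : DifferentiableAt ℂ v z₀) (i : Fin 4) :
    deriv (perturbationRight κ ε u v i) z₀ =
      (![κ * (deriv u z₀).1 + 2 * (deriv v z₀).1, -(κ * (deriv u z₀).2 + 2 * (deriv v z₀).2),
        -(ε * ((u z₀).1 + z₀ * (deriv u z₀).1)),
        ε * ((u z₀).2 + z₀ * (deriv u z₀).2)] : Fin 4 → ℂ) i := by
  have h₁ : HasDerivAt (fun z => (u z).1) (deriv u z₀).1 z₀ := hu.hasDerivAt.fst
  have h₂ : HasDerivAt (fun z => (u z).2) (deriv u z₀).2 z₀ := hu.hasDerivAt.snd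
  have k₁ : HasDerivAt (fun z => (v z).1) (deriv v z₀).1 z₀ := hv.hasDerivAt.fst
  have k₂ : HasDerivAt (fun z => (v z).2) (deriv v z₀).2 z₀ := hv.hasDerivAt.snd
  have m₁ : HasDerivAt (fun z => z * (u z).1) ((u z₀).1 + z₀ * (deriv u z₀).1) z₀ := by
    simpa using (hasDerivAt_id' z₀).fun_mul h₁
  have m₂ : HasDerivAt (fun z => z * (u z).2) ((u z₀).2 + z₀ * (deriv u z₀).2) z₀ := by
    simpa using (hasDerivAt_id' z₀).fun_mul h₂
  fin_cases i
  exacts [((h₁.const_mul _).add (k₁.const_mul _)).deriv,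
    ((h₂.const_mul _).add (k₂.const_mul _)).neg.deriv, (m₁.const_mul _).neg.deriv,
    (m₂.const_mul _).deriv]

lemma second_order_conditions_of_isLocalMin {κ ε : ℝ} (hu : AnalyticAt ℂ u z₀)
    (hv : AnalyticAt ℂ v z₀)
    (hmin : IsLocalMin (fun z => (κ - ε * ‖z‖ ^ 2) * (hermForm (u z) (u z)).re
      + 2 * (hermForm (u z) (v z)).re) z₀) :
    (κ - ε * ‖z₀‖ ^ 2 : ℝ) * hermForm (u z₀) (deriv u z₀) + hermForm (u z₀) (deriv v z₀)
        + hermForm (v z₀) (deriv u z₀) = ε * conj z₀ * hermForm (u z₀) (u z₀) ∧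
      0 ≤ ((κ - ε * ‖z₀‖ ^ 2 : ℝ) * hermForm (deriv u z₀) (deriv u z₀)
        + 2 * hermForm (deriv u z₀) (deriv v z₀)
        - ε * (hermForm (u z₀) (u z₀) + z₀ * hermForm (u z₀) (deriv u z₀)
          + conj z₀ * hermForm (deriv u z₀) (u z₀))).re := by
  have hz : conj z₀ * z₀ = ‖z₀‖ ^ 2 := Complex.conj_mul' z₀
  have hF := analyticAt_perturbationLeft hu
  have hH := analyticAt_perturbationRight κ ε hu hv
  simp only [← re_sum_conj_perturbationLeft_mul] at hmin
  have h₁ := sum_deriv_eq_zero_of_isLocalMin (fun i => (hF i).differentiableAt)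
    (fun i => (hH i).differentiableAt) hmin
  have h₂ := nonneg_sum_conj_deriv_mul_deriv_of_isLocalMin hF hH hmin
  simp only [deriv_perturbationLeft hu.differentiableAt,
    deriv_perturbationRight κ ε hu.differentiableAt hv.differentiableAt] at h₁ h₂
  simp only [perturbationLeft, perturbationRight, Fin.sum_univ_four, Matrix.cons_val, map_add,
    map_mul, map_neg, Complex.conj_ofReal, map_ofNat] at h₁ h₂
  simp only [hermForm]
  push_cast
  constructor
  · linear_combination (1 / 2) * h₁
      + ε * (conj (u z₀).1 * (deriv u z₀).1 - conj (u z₀).2 * (deriv u z₀).2) * hz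
  · refine h₂.trans_eq (congrArg Complex.re ?_)
    linear_combination ε * (conj (deriv u z₀).2 * (deriv u z₀).2
      - conj (deriv u z₀).1 * (deriv u z₀).1) * hz

lemma not_isLocalMin_hermForm_perturbation {κ ε : ℝ} (hu : AnalyticAt ℂ u z₀)
    (hv : AnalyticAt ℂ v z₀) (hpos : 0 < (hermForm (u z₀) (u z₀)).re) (hε : 0 < ε)
    (hκ : ε * ‖z₀‖ ^ 2 < κ) (hw : wedge (u z₀) (deriv v z₀) + wedge (v z₀) (deriv u z₀) = 0)
    (hzero : (κ - ε * ‖z₀‖ ^ 2) * (hermForm (u z₀) (u z₀)).re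
      + 2 * (hermForm (u z₀) (v z₀)).re = 0) :
    ¬ IsLocalMin (fun z => (κ - ε * ‖z‖ ^ 2) * (hermForm (u z) (u z)).re
      + 2 * (hermForm (u z) (v z)).re) z₀ := by
  intro hmin
  obtain ⟨h₁, h₂⟩ := second_order_conditions_of_isLocalMin hu hv hmin
  have hvar := re_hermForm_self_mul_second_variation hzero h₁ hw
  have := mul_nonneg (sub_pos.2 hκ).le (sq_nonneg ‖wedge (u z₀) (deriv u z₀)‖)
  nlinarith [mul_pos hε (pow_pos hpos 2), mul_nonneg hpos.le h₂]

lemma exists_isMinOn_of_tendsto_frontier {E : Type*} [PseudoMetricSpace E] [ProperSpace E]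
    {U : Set E} (hU : IsOpen U) (hb : Bornology.IsBounded U) {f : E → ℝ} (hf : ContinuousOn f U)
    (hlim : ∀ ζ ∈ frontier U, Tendsto f (𝓝[U] ζ) (𝓝 0)) {x : E} (hx : x ∈ U) (hneg : f x < 0) :
    ∃ y ∈ U, IsMinOn f U y := by
  have hcont : ContinuousOn (U.indicator f) (closure U) := by
    intro ζ hζ
    by_cases hζU : ζ ∈ U
    · exact ((hf.continuousAt (hU.mem_nhds hζU)).congr
        (Set.eqOn_indicator.symm.eventuallyEq_of_mem (hU.mem_nhds hζU))).continuousWithinAt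
    · refine ContinuousAt.continuousWithinAt ?_
      rw [ContinuousAt, Set.indicator_of_notMem hζU]
      classical
      exact (hlim ζ ⟨hζ, hU.interior_eq.symm ▸ hζU⟩).piecewise tendsto_const_nhds
  obtain ⟨y, -, hy⟩ := hb.isCompact_closure.exists_isMinOn ⟨x, subset_closure hx⟩ hcont
  have hyx := hy (subset_closure hx)
  have hyU : y ∈ U := by
    by_contra hyU
    simp only [Set.mem_ofPred_eq, Set.indicator_of_notMem hyU, Set.indicator_of_mem hx] at hyx
    linarith
  refine ⟨y, hyU, fun z hz => ?_⟩
  simpa only [Set.mem_ofPred_eq, Set.indicator_of_mem hyU, Set.indicator_of_mem hz]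
    using hy (subset_closure hz)

lemma exists_isMinOn_add_mul_one_sub_norm_sq {E : Type*} [NormedAddCommGroup E] [NormedSpace ℝ E]
    [ProperSpace E] {ψ : E → ℝ} (hψ : ContinuousOn ψ (ball 0 1))
    (hlim : ∀ ζ ∈ sphere (0 : E) 1, Tendsto ψ (𝓝[ball 0 1] ζ) (𝓝 0)) {x : E} (hx : x ∈ ball 0 1)
    (hneg : ψ x < 0) :
    ∃ ε > 0, ∃ y ∈ ball 0 1, ψ y < 0 ∧ IsMinOn (fun w => ψ w + ε * (1 - ‖w‖ ^ 2)) (ball 0 1) y := by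
  set ε : ℝ := -ψ x / 2 with hε
  obtain ⟨y, hy, hmin⟩ : ∃ y ∈ ball (0 : E) 1,
      IsMinOn (fun w => ψ w + ε * (1 - ‖w‖ ^ 2)) (ball 0 1) y := by
    refine exists_isMinOn_of_tendsto_frontier isOpen_ball isBounded_ball
      (hψ.add (by fun_prop)) (fun ζ hζ => ?_) hx ?_
    · replace hζ := frontier_ball_subset_sphere hζ
      have h : Tendsto (fun w : E => ε * (1 - ‖w‖ ^ 2)) (𝓝[ball 0 1] ζ) (𝓝 0) :=
        (Continuous.tendsto' (by fun_prop) _ _ (by simp [mem_sphere_zero_iff_norm.1 hζ])).mono_left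
          inf_le_left
      simpa using (hlim ζ hζ).add h
    · nlinarith [sq_nonneg ‖x‖]
  refine ⟨ε, by linarith, y, hy, ?_, hmin⟩
  have hφ := isMinOn_iff.1 hmin x hx
  have hy1 : ‖y‖ < 1 := mem_ball_zero_iff.1 hy
  have : 0 ≤ ε * (1 - ‖y‖ ^ 2) := mul_nonneg (by linarith) (by nlinarith [norm_nonneg y])
  nlinarith [sq_nonneg ‖x‖]

/- At the minimum supplied by `exists_isMinOn_add_mul_one_sub_norm_sq`, clearing the denominator
`⟨u, u⟩` gives exactly the local minimum excluded by `not_isLocalMin_hermForm_perturbation`. -/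
theorem re_hermForm_nonneg_of_tendsto_sphere (hu : DifferentiableOn ℂ u (ball 0 1))
    (hv : DifferentiableOn ℂ v (ball 0 1))
    (hpos : ∀ z ∈ ball (0 : ℂ) 1, 0 < (hermForm (u z) (u z)).re)
    (hw : ∀ z ∈ ball (0 : ℂ) 1, wedge (u z) (deriv v z) + wedge (v z) (deriv u z) = 0)
    (hlim : ∀ ζ ∈ sphere (0 : ℂ) 1,
      Tendsto (fun z => 2 * (hermForm (u z) (v z)).re / (hermForm (u z) (u z)).re)
        (𝓝[ball 0 1] ζ) (𝓝 0)) :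
    ∀ z ∈ ball (0 : ℂ) 1, 0 ≤ (hermForm (u z) (v z)).re := by
  set ψ : ℂ → ℝ := fun z => 2 * (hermForm (u z) (v z)).re / (hermForm (u z) (u z)).re
  have hψD : ∀ z ∈ ball (0 : ℂ) 1,
      2 * (hermForm (u z) (v z)).re = ψ z * (hermForm (u z) (u z)).re :=
    fun z hz => (div_mul_cancel₀ _ (hpos z hz).ne').symm
  have hcont : ContinuousOn ψ (ball 0 1) := by
    have := hu.continuousOn
    have := hv.continuousOn
    refine ContinuousOn.div ?_ ?_ fun z hz => (hpos z hz).ne' <;> unfold hermForm <;> fun_prop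
  intro z hz
  by_contra! hneg
  obtain ⟨ε, hε, p, hp, hψp, hmin⟩ := exists_isMinOn_add_mul_one_sub_norm_sq hcont hlim hz
    (div_neg_of_neg_of_pos (by linarith) (hpos z hz))
  have hball := isOpen_ball.mem_nhds hp
  refine not_isLocalMin_hermForm_perturbation (κ := ε * ‖p‖ ^ 2 - ψ p) (ε := ε)
    (hu.analyticAt hball) (hv.analyticAt hball) (hpos p hp) hε (by linarith) (hw p hp)
    (by rw [hψD p hp]; ring) ?_
  filter_upwards [hball] with w hw'
  rw [hψD p hp, hψD w hw']
  nlinarith [mul_nonneg (hpos w hw').le (sub_nonneg.2 (isMinOn_iff.1 hmin w hw'))]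

end MaximumPrinciple

section ConjReflect

/-- The conjugate reciprocal `z ^ N * conj (f (1 / conj z))` of a polynomial `f` regarded as having
degree `N`. On the unit circle it has the same modulus as `f`. -/
noncomputable def conjReflect (N : ℕ) (f : ℂ[X]) : ℂ[X] := reflect N (f.map (starRingEnd ℂ))

variable {N : ℕ} {f g : ℂ[X]} {z : ℂ}

lemma conjReflect_smul (N : ℕ) (r : ℝ) (f : ℂ[X]) :
    conjReflect N (r • f) = r • conjReflect N f := by
  ext k
  simp [conjReflect, coeff_reflect]

lemma natDegree_conjReflect_le (hf : f.natDegree ≤ N) : (conjReflect N f).natDegree ≤ N :=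
  natDegree_reflect_le.trans (max_le le_rfl (natDegree_map_le.trans hf))

lemma coeff_conjReflect_of_le {k : ℕ} (hk : k ≤ N) :
    (conjReflect N f).coeff k = conj (f.coeff (N - k)) := by
  rw [conjReflect, coeff_reflect, revAt_le hk, coeff_map]

lemma conjReflect_mul {M : ℕ} (hf : f.natDegree ≤ N) (hg : g.natDegree ≤ M) :
    conjReflect (N + M) (f * g) = conjReflect N f * conjReflect M g := by
  rw [conjReflect, Polynomial.map_mul,
    reflect_mul _ _ (natDegree_map_le.trans hf) (natDegree_map_le.trans hg), conjReflect,
    conjReflect]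

lemma conjReflect_succ (hf : f.natDegree ≤ N) : conjReflect (N + 1) f = X * conjReflect N f := by
  have h := conjReflect_mul (M := 1) (g := C 1) hf (by simp)
  simpa [conjReflect, mul_comm] using h

lemma eval_zero_conjReflect_succ (hf : f.natDegree ≤ N) :
    (conjReflect (N + 1) f).eval 0 = 0 := by
  simp [conjReflect_succ hf]

lemma eval_conjReflect (hf : f.natDegree ≤ N) (hz : ‖z‖ = 1) :
    (conjReflect N f).eval z = z ^ N * conj (f.eval z) := by
  have hzz : conj z * z = 1 := by simp [Complex.conj_mul', hz]
  let _ : Invertible (conj z) := ⟨z, by rwa [mul_comm], hzz⟩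
  have h := eval₂_reflect_mul_pow (RingHom.id ℂ) (conj z) N (f.map (starRingEnd ℂ))
    (natDegree_map_le.trans hf)
  change (conjReflect N f).eval z * conj z ^ N = (f.map (starRingEnd ℂ)).eval (conj z) at h
  rw [eval_map_apply] at h
  rw [← h, mul_left_comm, ← mul_pow, mul_comm z, hzz, one_pow, mul_one]

lemma coeff_X_mul_derivative (f : ℂ[X]) (k : ℕ) : (X * derivative f).coeff k = k * f.coeff k := by
  cases k <;> simp [coeff_derivative, mul_comm]

lemma X_mul_derivative_conjReflect (hf : f.natDegree ≤ N) :
    X * derivative (conjReflect N f)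
      = C (N : ℂ) * conjReflect N f - conjReflect N (X * derivative f) := by
  ext k
  rw [coeff_X_mul_derivative, coeff_sub, coeff_C_mul]
  rcases le_or_gt k N with hk | hk
  · rw [coeff_conjReflect_of_le hk, coeff_conjReflect_of_le hk, coeff_X_mul_derivative, map_mul,
      map_natCast, Nat.cast_sub hk]
    ring
  · have h₁ : f.coeff k = 0 := coeff_eq_zero_of_natDegree_lt (hf.trans_lt hk)
    rw [conjReflect, conjReflect, coeff_reflect, coeff_reflect, revAt_eq_self_of_lt hk, coeff_map,
      coeff_map, coeff_X_mul_derivative, h₁]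
    simp

lemma mul_eval_derivative_conjReflect (hf : f.natDegree ≤ N) (hz : ‖z‖ = 1) :
    z * (derivative (conjReflect N f)).eval z
      = z ^ N * (N * conj (f.eval z) - conj (z * (derivative f).eval z)) := by
  have hdeg : (X * derivative f).natDegree ≤ N := by
    refine natDegree_le_iff_coeff_eq_zero.2 fun k hk => ?_
    rw [coeff_X_mul_derivative, coeff_eq_zero_of_natDegree_lt (hf.trans_lt hk), mul_zero]
  have h := congrArg (eval z) (X_mul_derivative_conjReflect hf)
  simp only [eval_mul, eval_X, eval_sub, eval_C, eval_conjReflect hf hz,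
    eval_conjReflect hdeg hz] at h
  rw [h]
  ring

/-- The quadratic form `N ‖f‖ ^ 2 - 2 Re (conj f * z f')`, polarized, at the point `z`. For `f`
without zeros in the closed unit disk and `‖z‖ = 1` it is `‖f z‖ ^ 2` times the angular derivative
of the Blaschke product `conjReflect N f / f`. -/
noncomputable def circleForm (N : ℕ) (z : ℂ) : ℂ[X] →ₗ[ℝ] ℂ[X] →ₗ[ℝ] ℝ :=
  LinearMap.mk₂ ℝ (fun f g => (N * (conj (f.eval z) * g.eval z)
      - conj (f.eval z) * (z * (derivative g).eval z)
      - conj (z * (derivative f).eval z) * g.eval z).re)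
    (fun f₁ f₂ g => by rw [← Complex.add_re]; congr 1; simp; ring)
    (fun c f g => by
      rw [smul_eq_mul, ← Complex.re_ofReal_mul]; congr 1; simp; ring)
    (fun f g₁ g₂ => by rw [← Complex.add_re]; congr 1; simp; ring)
    (fun c f g => by
      rw [smul_eq_mul, ← Complex.re_ofReal_mul]; congr 1; simp; ring)

lemma circleForm_apply (N : ℕ) (z : ℂ) (f g : ℂ[X]) :
    circleForm N z f g = (N * (conj (f.eval z) * g.eval z)
      - conj (f.eval z) * (z * (derivative g).eval z)
      - conj (z * (derivative f).eval z) * g.eval z).re := rfl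

lemma circleForm_comm (N : ℕ) (z : ℂ) (f g : ℂ[X]) :
    circleForm N z f g = circleForm N z g f := by
  rw [circleForm_apply, circleForm_apply, ← Complex.conj_re]
  congr 1
  simp only [map_sub, map_mul, Complex.conj_conj, map_natCast]
  ring

lemma circleForm_self_eq_zero (N : ℕ) (h : f.eval z = 0) :
    circleForm N z f f = 0 := by
  simp [circleForm_apply, h]

lemma circleForm_mul_self (N M : ℕ) (z : ℂ) (f g : ℂ[X]) :
    circleForm (N + M) z (f * g) (f * g)
      = ‖g.eval z‖ ^ 2 * circleForm N z f f + ‖f.eval z‖ ^ 2 * circleForm M z g g := by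
  simp only [circleForm_apply, ← Complex.re_ofReal_mul, ← Complex.add_re]
  congr 1
  simp only [Complex.ofReal_pow, ← Complex.conj_mul', eval_mul, derivative_mul, eval_add, map_mul,
    map_add, Nat.cast_add]
  ring

lemma circleForm_succ_self (N : ℕ) (z : ℂ) (f : ℂ[X]) :
    circleForm (N + 1) z f f = ‖f.eval z‖ ^ 2 + circleForm N z f f := by
  rw [circleForm_apply, circleForm_apply, ← Complex.ofReal_re (‖f.eval z‖ ^ 2), ← Complex.add_re,
    Complex.ofReal_pow, ← Complex.conj_mul']
  congr 1
  push_cast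
  ring

/-- Twice the polarization of the quadratic map `f ↦ wronskian f (conjReflect N f)`; the wronskian
is the numerator of the derivative of `conjReflect N f / f`. -/
noncomputable def polarWronskian (N : ℕ) (f g : ℂ[X]) : ℂ[X] :=
  wronskian f (conjReflect N g) + wronskian g (conjReflect N f)

lemma mul_eval_polarWronskian (hf : f.natDegree ≤ N) (hg : g.natDegree ≤ N) (hz : ‖z‖ = 1) :
    z * (polarWronskian N f g).eval z = z ^ N * (2 * circleForm N z f g : ℝ) := by
  have h₁ := mul_eval_derivative_conjReflect hf hz
  have h₂ := mul_eval_derivative_conjReflect hg hz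
  have h : (2 * circleForm N z f g : ℝ) = N * (conj (f.eval z) * g.eval z)
      - conj (f.eval z) * (z * (derivative g).eval z)
      - conj (z * (derivative f).eval z) * g.eval z + (N * (conj (g.eval z) * f.eval z)
      - conj (g.eval z) * (z * (derivative f).eval z)
      - conj (z * (derivative g).eval z) * f.eval z) := by
    rw [circleForm_apply, ← Complex.add_conj]
    simp only [map_sub, map_mul, Complex.conj_conj, map_natCast]
    ring
  rw [h]
  simp only [polarWronskian, wronskian, eval_add, eval_sub, eval_mul, eval_conjReflect hf hz,
    eval_conjReflect hg hz]
  linear_combination (g.eval z) * h₁ + (f.eval z) * h₂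

end ConjReflect

section BlaschkeDenom

lemma norm_one_sub_conj_mul_sq_sub (a z : ℂ) :
    ‖1 - conj a * z‖ ^ 2 - ‖z - a‖ ^ 2 = (1 - ‖a‖ ^ 2) * (1 - ‖z‖ ^ 2) := by
  simp only [← Complex.normSq_eq_norm_sq, Complex.normSq_apply, Complex.sub_re, Complex.sub_im,
    Complex.mul_re, Complex.mul_im, Complex.conj_re, Complex.conj_im, Complex.one_re,
    Complex.one_im]
  ring

lemma norm_sub_le_norm_one_sub_conj_mul {a z : ℂ} (ha : ‖a‖ ≤ 1) (hz : ‖z‖ ≤ 1) :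
    ‖z - a‖ ≤ ‖1 - conj a * z‖ := by
  refine (sq_le_sq₀ (norm_nonneg _) (norm_nonneg _)).1 (sub_nonneg.1 ?_)
  rw [norm_one_sub_conj_mul_sq_sub]
  exact mul_nonneg (sub_nonneg.2 (pow_le_one₀ (norm_nonneg _) ha))
    (sub_nonneg.2 (pow_le_one₀ (norm_nonneg _) hz))

lemma one_sub_conj_mul_ne_zero {a z : ℂ} (ha : ‖a‖ < 1) (hz : ‖z‖ ≤ 1) : 1 - conj a * z ≠ 0 := by
  refine sub_ne_zero.2 fun h => ?_
  have : ‖conj a * z‖ < 1 := by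
    rw [norm_mul, RCLike.norm_conj]
    exact mul_lt_one_of_nonneg_of_lt_one_left (norm_nonneg _) ha hz
  simp [← h] at this

variable {ι : Type*} [Fintype ι] {a : ι → ℂ} {z : ℂ}

/-- The denominator `∏ j, (1 - conj (a j) * z)` of the Blaschke product with zeros `a j`. -/
noncomputable def blaschkeDenom (a : ι → ℂ) : ℂ[X] := ∏ j, (1 - C (conj (a j)) * X)

lemma eval_blaschkeDenom (a : ι → ℂ) (z : ℂ) :
    (blaschkeDenom a).eval z = ∏ j, (1 - conj (a j) * z) := by
  simp [blaschkeDenom, eval_prod]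

lemma natDegree_one_sub_C_mul_X_le (c : ℂ) : (1 - C c * X).natDegree ≤ 1 := by compute_degree

lemma natDegree_prod_le_card {κ : Type*} {f : κ → ℂ[X]} (hf : ∀ j, (f j).natDegree ≤ 1)
    (s : Finset κ) : (∏ j ∈ s, f j).natDegree ≤ s.card := by
  refine (natDegree_prod_le s f).trans ?_
  simpa using Finset.sum_le_card_nsmul s (fun j => (f j).natDegree) 1 fun j _ => hf j

lemma natDegree_blaschkeDenom_le (a : ι → ℂ) :
    (blaschkeDenom a).natDegree ≤ Fintype.card ι :=
  natDegree_prod_le_card (fun _ => natDegree_one_sub_C_mul_X_le _) Finset.univ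

lemma conjReflect_prod {κ : Type*} {f : κ → ℂ[X]} (hf : ∀ j, (f j).natDegree ≤ 1) (s : Finset κ) :
    conjReflect s.card (∏ j ∈ s, f j) = ∏ j ∈ s, conjReflect 1 (f j) := by
  classical
  induction s using Finset.induction_on with
  | empty => simp [conjReflect]
  | insert j s hj ih =>
    rw [Finset.prod_insert hj, Finset.prod_insert hj, Finset.card_insert_of_notMem hj, add_comm,
      conjReflect_mul (hf j) (natDegree_prod_le_card hf s), ih]

lemma conjReflect_blaschkeDenom (a : ι → ℂ) :
    conjReflect (Fintype.card ι) (blaschkeDenom a) = ∏ j, (X - C (a j)) := by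
  rw [← Finset.card_univ, blaschkeDenom, conjReflect_prod fun j => natDegree_one_sub_C_mul_X_le _]
  refine Finset.prod_congr rfl fun j _ => ?_
  simp [conjReflect]

lemma norm_eval_conjReflect_blaschkeDenom_le (ha : ∀ j, ‖a j‖ ≤ 1) (hz : ‖z‖ ≤ 1) :
    ‖(conjReflect (Fintype.card ι) (blaschkeDenom a)).eval z‖ ≤ ‖(blaschkeDenom a).eval z‖ := by
  rw [conjReflect_blaschkeDenom, eval_prod, eval_blaschkeDenom, norm_prod, norm_prod]
  refine Finset.prod_le_prod (fun j _ => norm_nonneg _) fun j _ => ?_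
  simpa using norm_sub_le_norm_one_sub_conj_mul (ha j) hz

lemma eval_blaschkeDenom_ne_zero (ha : ∀ j, ‖a j‖ < 1) (hz : ‖z‖ ≤ 1) :
    (blaschkeDenom a).eval z ≠ 0 := by
  rw [eval_blaschkeDenom]
  exact Finset.prod_ne_zero_iff.2 fun j _ => one_sub_conj_mul_ne_zero (ha j) hz

lemma eval_blaschkeDenom_self {j : ι} (h : ‖a j‖ = 1) : (blaschkeDenom a).eval (a j) = 0 := by
  rw [eval_blaschkeDenom]
  exact Finset.prod_eq_zero (Finset.mem_univ j) (by simp [Complex.conj_mul', h])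

lemma circleForm_one_sub_C_mul_X (c : ℂ) (hz : ‖z‖ = 1) :
    circleForm 1 z (1 - C c * X) (1 - C c * X) = 1 - ‖c‖ ^ 2 := by
  have hzz : conj z * z = 1 := by simp [Complex.conj_mul', hz]
  rw [circleForm_apply, ← Complex.ofReal_re (1 - ‖c‖ ^ 2)]
  congr 1
  simp only [Complex.ofReal_sub, Complex.ofReal_pow, ← Complex.conj_mul', derivative_one,
    derivative_C_mul_X, eval_sub, eval_one, eval_mul, eval_C, eval_X, eval_zero, map_sub, map_mul,
    map_one, map_zero, Complex.ofReal_one, Nat.cast_one]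
  linear_combination (-conj c * c) * hzz

lemma circleForm_blaschkeDenom_nonneg (ha : ∀ j, ‖a j‖ ≤ 1) (hz : ‖z‖ = 1) :
    0 ≤ circleForm (Fintype.card ι) z (blaschkeDenom a) (blaschkeDenom a) := by
  classical
  rw [← Finset.card_univ, blaschkeDenom]
  induction (Finset.univ : Finset ι) using Finset.induction_on with
  | empty => simp [circleForm_apply]
  | insert j s hj ih =>
    rw [Finset.prod_insert hj, Finset.card_insert_of_notMem hj, add_comm, circleForm_mul_self,
      circleForm_one_sub_C_mul_X _ hz, RCLike.norm_conj]
    have := pow_le_one₀ (n := 2) (norm_nonneg _) (ha j)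
    exact add_nonneg (mul_nonneg (sq_nonneg _) (by linarith)) (mul_nonneg (sq_nonneg _) ih)

lemma blaschkeDenom_cons {n : ℕ} (a₀ : ℂ) (a : Fin n → ℂ) :
    blaschkeDenom (Fin.cons a₀ a : Fin (n + 1) → ℂ)
      = (1 - C (conj a₀) * X) * blaschkeDenom a := by
  simp [blaschkeDenom, Fin.prod_univ_succ]

lemma exists_eq_C_mul_blaschkeDenom {n : ℕ} {G : ℂ[X]} (hdeg : G.natDegree ≤ n)
    (hG : ∀ z, ‖z‖ ≤ 1 → G.eval z ≠ 0) :
    ∃ a : Fin n → ℂ, (∀ j, ‖a j‖ < 1) ∧ G = C (G.coeff 0) * blaschkeDenom a := by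
  induction n generalizing G with
  | zero => exact ⟨0, by simp, by simpa [blaschkeDenom] using eq_C_of_natDegree_le_zero hdeg⟩
  | succ n ih =>
    by_cases hconst : G.natDegree = 0
    · exact ⟨0, by simp, by simpa [blaschkeDenom] using eq_C_of_natDegree_eq_zero hconst⟩
    obtain ⟨ρ, hρ⟩ := IsAlgClosed.exists_root G fun h => hconst (natDegree_eq_of_degree_eq_some h)
    have hρ₁ : 1 < ‖ρ‖ := not_le.1 fun h => hG ρ h hρ
    have hρ₀ : ρ ≠ 0 := norm_pos_iff.1 (zero_lt_one.trans hρ₁)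
    obtain ⟨Q, rfl⟩ := dvd_iff_isRoot.2 hρ
    have hQ : (X - C ρ) * Q = (1 - C ρ⁻¹ * X) * (C (-ρ) * Q) := by
      have : C ρ⁻¹ * C ρ = (1 : ℂ[X]) := by rw [← C_mul, inv_mul_cancel₀ hρ₀, C_1]
      rw [C_neg]
      linear_combination (-X * Q) * this
    have hQdeg : (C (-ρ) * Q).natDegree ≤ n := by
      have hQ₀ : Q ≠ 0 := by rintro rfl; simp at hconst
      rw [natDegree_mul (X_sub_C_ne_zero ρ) hQ₀, natDegree_X_sub_C] at hdeg
      exact (natDegree_C_mul_le _ _).trans (by lia)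
    obtain ⟨a, ha, h⟩ := ih hQdeg fun z hz h => hG z hz (by rw [hQ, eval_mul, h, mul_zero])
    have hcoeff : ((X - C ρ) * Q).coeff 0 = (C (-ρ) * Q).coeff 0 := by simp [mul_coeff_zero]
    refine ⟨Fin.cons (conj ρ⁻¹) a, Fin.forall_fin_succ.2 ⟨?_, ha⟩, ?_⟩
    · simpa using inv_lt_one_of_one_lt₀ hρ₁
    · rw [hcoeff, hQ, blaschkeDenom_cons, Complex.conj_conj, mul_left_comm (C _), ← h]

end BlaschkeDenom

section BoundaryBehaviour

lemma tendsto_div_one_sub_norm {E : Type*} [NormedAddCommGroup E] [NormedSpace ℝ E] {F : E → ℝ}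
    {F' : E →L[ℝ] ℝ} {ζ : E} (hF : HasStrictFDerivAt F F' ζ) (hF₀ : ∀ x, ‖x‖ = 1 → F x = 0)
    (hζ : ‖ζ‖ = 1) : Tendsto (fun x => F x / (1 - ‖x‖)) (𝓝[ball 0 1] ζ) (𝓝 (-F' ζ)) := by
  have hζ₀ : ‖ζ‖ ≠ 0 := by simp [hζ]
  have hproj : Tendsto (fun x : E => ‖x‖⁻¹ • x) (𝓝[ball 0 1] ζ) (𝓝 ζ) := by
    have : ContinuousAt (fun x : E => ‖x‖⁻¹ • x) ζ := by fun_prop (disch := exact hζ₀)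
    simpa [ContinuousAt, hζ] using this.tendsto.mono_left nhdsWithin_le_nhds
  have hdiff : ∀ᶠ x in 𝓝[ball 0 1] ζ, 0 < 1 - ‖x‖ ∧ ‖‖x‖⁻¹ • x‖ = 1 ∧
      x - ‖x‖⁻¹ • x = -((1 - ‖x‖) • ‖x‖⁻¹ • x) := by
    have hne : ∀ᶠ x in 𝓝[ball 0 1] ζ, ‖x‖ ≠ 0 :=
      (continuous_norm.continuousAt.eventually_ne hζ₀).filter_mono nhdsWithin_le_nhds
    filter_upwards [self_mem_nhdsWithin, hne] with x hx hx₀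
    refine ⟨sub_pos.2 (mem_ball_zero_iff.1 hx), by simp [norm_smul, hx₀], ?_⟩
    rw [sub_smul, one_smul, smul_inv_smul₀ hx₀, neg_sub]
  have hrem := hF.isLittleO.comp_tendsto ((tendsto_id'.2 nhdsWithin_le_nhds).prodMk_nhds hproj)
  have hrem' : Tendsto (fun x => (F x - F (‖x‖⁻¹ • x) - F' (x - ‖x‖⁻¹ • x)) / (1 - ‖x‖))
      (𝓝[ball 0 1] ζ) (𝓝 0) := by
    refine (hrem.trans_isBigO (Asymptotics.IsBigO.of_norm_eventuallyLE ?_)).tendsto_div_nhds_zero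
    filter_upwards [hdiff] with x ⟨hx, hx₁, hx₂⟩
    simp [hx₂, norm_smul (1 - ‖x‖), hx₁, abs_of_pos hx]
  have hlim := hrem'.add ((F'.continuous.tendsto ζ).comp hproj).neg
  rw [zero_add] at hlim
  refine hlim.congr' ?_
  filter_upwards [hdiff] with x ⟨hx, hx₁, hx₂⟩
  rw [hx₂, hF₀ _ hx₁, map_neg, map_smul, smul_eq_mul, Function.comp_apply]
  field_simp
  ring

/-- The pair `(f, f*)` formed by `f` and its conjugate reciprocal `f* = conjReflect N f`. Its
quotient `f* / f` is a Blaschke product when `f` has no zeros in the closed unit disk. -/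
noncomputable def reflectPair (N : ℕ) (f : ℂ[X]) (z : ℂ) : ℂ × ℂ :=
  (f.eval z, (conjReflect N f).eval z)

variable {N : ℕ} {f g : ℂ[X]} {z ζ : ℂ}

lemma hasDerivAt_reflectPair (N : ℕ) (f : ℂ[X]) (z : ℂ) :
    HasDerivAt (reflectPair N f)
      ((derivative f).eval z, (derivative (conjReflect N f)).eval z) z :=
  (f.hasDerivAt z).prodMk ((conjReflect N f).hasDerivAt z)

lemma re_hermForm_reflectPair_eq_zero (hf : f.natDegree ≤ N) (hg : g.natDegree ≤ N)
    (hz : ‖z‖ = 1) : (hermForm (reflectPair N f z) (reflectPair N g z)).re = 0 := by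
  have hzz : conj z ^ N * z ^ N = 1 := by rw [← mul_pow]; simp [Complex.conj_mul', hz]
  have : hermForm (reflectPair N f z) (reflectPair N g z)
      = conj (f.eval z) * g.eval z - conj (conj (f.eval z) * g.eval z) := by
    simp only [hermForm, reflectPair, eval_conjReflect hf hz, eval_conjReflect hg hz, map_mul,
      map_pow, Complex.conj_conj]
    linear_combination (-(f.eval z * conj (g.eval z))) * hzz
  rw [this, Complex.sub_re, Complex.conj_re, sub_self]

lemma hasDerivAt_re_hermForm_reflectPair_comp_line (hf : f.natDegree ≤ N) (hg : g.natDegree ≤ N)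
    (hζ : ‖ζ‖ = 1) :
    HasDerivAt (fun s : ℝ => (hermForm (reflectPair N f (ζ + s * ζ))
      (reflectPair N g (ζ + s * ζ))).re) (-(2 * circleForm N ζ f g)) 0 := by
  have hp : ζ + (0 : ℝ) * ζ = ζ := by simp
  have hzz : conj ζ ^ N * ζ ^ N = 1 := by rw [← mul_pow]; simp [Complex.conj_mul', hζ]
  have h (p q : ℂ[X]) := hasDerivAt_conj_mul_comp_line (p := ζ) (v := ζ) (s := 0)
    (p.hasDerivAt _) (q.hasDerivAt _)
  refine (hasDerivAt_re ((h f g).fun_sub (h (conjReflect N f) (conjReflect N g)))).congr_deriv ?_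
  rw [hp, two_mul]
  nth_rewrite 2 [circleForm_comm]
  have him : (N * (conj (f.eval ζ) * g.eval ζ - conj (conj (f.eval ζ) * g.eval ζ))).re = 0 := by
    rw [← Complex.ofReal_natCast, Complex.re_ofReal_mul, Complex.sub_re, Complex.conj_re, sub_self,
      mul_zero]
  rw [circleForm_apply, circleForm_apply, ← Complex.add_re, ← Complex.neg_re, ← sub_eq_zero,
    ← Complex.sub_re]
  refine (congrArg Complex.re ?_).trans him
  simp only [mul_comm _ ζ, mul_eval_derivative_conjReflect hf hζ,
    mul_eval_derivative_conjReflect hg hζ, eval_conjReflect hf hζ, eval_conjReflect hg hζ,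
    map_mul, map_sub, map_pow, map_natCast, Complex.conj_conj]
  linear_combination (-(N * f.eval ζ - ζ * (derivative f).eval ζ) * conj (g.eval ζ)
    - f.eval ζ * (N * conj (g.eval ζ) - conj ζ * conj ((derivative g).eval ζ))) * hzz

lemma tendsto_re_hermForm_reflectPair_div (hf : f.natDegree ≤ N) (hg : g.natDegree ≤ N)
    (hζ : ‖ζ‖ = 1) :
    Tendsto (fun z => (hermForm (reflectPair N f z) (reflectPair N g z)).re / (1 - ‖z‖))
      (𝓝[ball 0 1] ζ) (𝓝 (2 * circleForm N ζ f g)) := by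
  have hev (p : ℂ[X]) : ContDiff ℝ 1 fun z : ℂ => p.eval z :=
    (p.contDiff_aeval 1 : ContDiff ℂ 1 fun z : ℂ => aeval z p).restrict_scalars ℝ
  have hconj (p : ℂ[X]) : ContDiff ℝ 1 fun z : ℂ => conj (p.eval z) :=
    Complex.conjCLE.contDiff.comp (hev p)
  have hF : ContDiff ℝ 1 fun z => (hermForm (reflectPair N f z) (reflectPair N g z)).re :=
    Complex.reCLM.contDiff.comp (((hconj f).mul (hev g)).sub ((hconj _).mul (hev _)))
  have hF' := hF.contDiffAt.hasStrictFDerivAt (x := ζ) one_ne_zero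
  have hderiv := (hF'.hasFDerivAt.comp_hasDerivAt_of_eq 0 (hasDerivAt_line ζ ζ 0) (by simp)).unique
    (hasDerivAt_re_hermForm_reflectPair_comp_line hf hg hζ)
  have h := tendsto_div_one_sub_norm hF'
    (fun x => re_hermForm_reflectPair_eq_zero hf hg) hζ
  rwa [hderiv, neg_neg] at h

lemma tendsto_hermForm_reflectPair_ratio (hf : f.natDegree ≤ N) (hg : g.natDegree ≤ N)
    (hζ : ‖ζ‖ = 1) (hff : circleForm N ζ f f ≠ 0) (hfg : circleForm N ζ f g = 0) :
    Tendsto (fun z => 2 * (hermForm (reflectPair N f z) (reflectPair N g z)).re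
      / (hermForm (reflectPair N f z) (reflectPair N f z)).re) (𝓝[ball 0 1] ζ) (𝓝 0) := by
  have h := ((tendsto_re_hermForm_reflectPair_div hf hg hζ).const_mul 2).div
    (tendsto_re_hermForm_reflectPair_div hf hf hζ) (mul_ne_zero two_ne_zero hff)
  rw [hfg, mul_zero, mul_zero, zero_div] at h
  refine h.congr' ?_
  filter_upwards [self_mem_nhdsWithin] with z hz
  have : 1 - ‖z‖ ≠ 0 := (sub_pos.2 (mem_ball_zero_iff.1 hz)).ne'
  rw [Pi.div_apply, ← mul_div_assoc, div_div_div_cancel_right₀ this]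

end BoundaryBehaviour

section InfinitesimalUniqueness

variable {N : ℕ} {f g : ℂ[X]} {z : ℂ}

lemma wedge_reflectPair_deriv_add (N : ℕ) (f g : ℂ[X]) (z : ℂ) :
    wedge (reflectPair N f z) (deriv (reflectPair N g) z)
      + wedge (reflectPair N g z) (deriv (reflectPair N f) z) = (polarWronskian N f g).eval z := by
  rw [(hasDerivAt_reflectPair N f z).deriv, (hasDerivAt_reflectPair N g z).deriv]
  simp only [wedge, reflectPair, polarWronskian, wronskian, eval_add, eval_sub, eval_mul]
  ring

lemma circleForm_eq_zero_of_polarWronskian_eq_zero (hf : f.natDegree ≤ N) (hg : g.natDegree ≤ N)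
    (hfg : polarWronskian N f g = 0) (hz : ‖z‖ = 1) : circleForm N z f g = 0 := by
  have hz₀ : z ≠ 0 := norm_pos_iff.1 (hz ▸ one_pos)
  have h := mul_eval_polarWronskian hf hg hz
  rw [hfg, eval_zero, mul_zero, eq_comm, mul_eq_zero, or_iff_right (pow_ne_zero _ hz₀)] at h
  exact_mod_cast (mul_eq_zero.1 (Complex.ofReal_eq_zero.1 h)).resolve_left two_ne_zero

lemma re_hermForm_reflectPair_nonneg (hf : f.natDegree ≤ N) (hg : g.natDegree ≤ N)
    (hpos : ∀ z ∈ ball (0 : ℂ) 1, 0 < (hermForm (reflectPair N f z) (reflectPair N f z)).re)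
    (hcircle : ∀ z, ‖z‖ = 1 → circleForm N z f f ≠ 0) (hfg : polarWronskian N f g = 0) :
    ∀ z ∈ ball (0 : ℂ) 1, 0 ≤ (hermForm (reflectPair N f z) (reflectPair N g z)).re := by
  have hdiff (p : ℂ[X]) : DifferentiableOn ℂ (reflectPair N p) (ball 0 1) :=
    fun z _ => (hasDerivAt_reflectPair N p z).differentiableAt.differentiableWithinAt
  refine re_hermForm_nonneg_of_tendsto_sphere (hdiff f) (hdiff g) hpos
    (fun z _ => by rw [wedge_reflectPair_deriv_add, hfg, eval_zero]) fun ζ hζ => ?_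
  have hζ := mem_sphere_zero_iff_norm.1 hζ
  exact tendsto_hermForm_reflectPair_ratio hf hg hζ (hcircle ζ hζ)
    (circleForm_eq_zero_of_polarWronskian_eq_zero hf hg hfg hζ)

lemma reflectPair_smul (N : ℕ) (r : ℝ) (f : ℂ[X]) (z : ℂ) :
    reflectPair N (r • f) z = r • reflectPair N f z := by
  simp [reflectPair, conjReflect_smul]

lemma polarWronskian_smul_right (N : ℕ) (r : ℝ) (f g : ℂ[X]) :
    polarWronskian N f (r • g) = r • polarWronskian N f g := by
  simp [polarWronskian, wronskian, conjReflect_smul, smul_sub]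

lemma hermForm_smul_right (r : ℝ) (x y : ℂ × ℂ) : hermForm x (r • y) = r • hermForm x y := by
  simp [hermForm, mul_sub, mul_left_comm]

lemma re_hermForm_reflectPair_eq_zero_of_mem_ball (hf : f.natDegree ≤ N) (hg : g.natDegree ≤ N)
    (hpos : ∀ z ∈ ball (0 : ℂ) 1, 0 < (hermForm (reflectPair N f z) (reflectPair N f z)).re)
    (hcircle : ∀ z, ‖z‖ = 1 → circleForm N z f f ≠ 0) (hfg : polarWronskian N f g = 0)
    (hz : z ∈ ball (0 : ℂ) 1) : (hermForm (reflectPair N f z) (reflectPair N g z)).re = 0 := by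
  have hneg := re_hermForm_reflectPair_nonneg hf
    ((natDegree_smul_le (-1 : ℝ) g).trans hg) hpos hcircle
    (by rw [polarWronskian_smul_right, hfg, smul_zero]) z hz
  rw [reflectPair_smul, hermForm_smul_right, neg_one_smul, Complex.neg_re] at hneg
  exact le_antisymm (neg_nonneg.1 hneg) (re_hermForm_reflectPair_nonneg hf hg hpos hcircle hfg z hz)

lemma hermForm_reflectPair_add_hermForm_reflectPair (h : ∀ z ∈ ball (0 : ℂ) 1,
      (hermForm (reflectPair N f z) (reflectPair N g z)).re = 0) {w : ℂ}
    (hw : w ∈ ball (0 : ℂ) 1) (hz : z ∈ ball (0 : ℂ) 1) :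
    hermForm (reflectPair N f w) (reflectPair N g z)
      + hermForm (reflectPair N g w) (reflectPair N f z) = 0 := by
  let F : Fin 4 → ℂ[X] := ![f, conjReflect N f, g, conjReflect N g]
  let G : Fin 4 → ℂ[X] := ![g, -conjReflect N g, f, -conjReflect N f]
  have hsum (w z : ℂ) : ∑ i, conj ((F i).eval w) * (G i).eval z
      = hermForm (reflectPair N f w) (reflectPair N g z)
        + hermForm (reflectPair N g w) (reflectPair N f z) := by
    simp only [F, G, Fin.sum_univ_four, hermForm, reflectPair, Matrix.cons_val, eval_neg]
    ring
  rw [← hsum]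
  refine sum_conj_mul_eq_zero_of_diagonal isOpen_ball (convex_ball 0 1).isPreconnected
    (fun i => (F i).differentiableOn) (fun i => (G i).differentiableOn) (fun z hz => ?_) hw hz
  rw [hsum, ← conj_hermForm (reflectPair N f z), Complex.add_conj, h z hz]
  simp

/- Polarizing the identity `Re ⟨(f, f*), (g, g*)⟩ = 0` at the origin, where `f*` and `g*` vanish,
turns it into a linear relation between `f` and `g`. -/
theorem eq_zero_of_polarWronskian_eq_zero {n : ℕ} (hf : f.natDegree ≤ n) (hg : g.natDegree ≤ n)
    (hf₀ : (f.coeff 0).im = 0) (hg₀ : (g.coeff 0).im = 0)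
    (hpos : ∀ z ∈ ball (0 : ℂ) 1,
      0 < (hermForm (reflectPair (n + 1) f z) (reflectPair (n + 1) f z)).re)
    (hcircle : ∀ z, ‖z‖ = 1 → circleForm (n + 1) z f f ≠ 0)
    (hfg : polarWronskian (n + 1) f g = 0) : g = 0 := by
  have hmem : (0 : ℂ) ∈ ball 0 1 := mem_ball_self one_pos
  have hherm : ∀ z ∈ ball (0 : ℂ) 1,
      (hermForm (reflectPair (n + 1) f z) (reflectPair (n + 1) g z)).re = 0 := fun z =>
    re_hermForm_reflectPair_eq_zero_of_mem_ball (hf.trans n.le_succ) (hg.trans n.le_succ) hpos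
      hcircle hfg
  have hf_star := eval_zero_conjReflect_succ hf
  have hg_star := eval_zero_conjReflect_succ hg
  have hfconj : conj (f.coeff 0) = f.coeff 0 := Complex.conj_eq_iff_im.2 hf₀
  have hgconj : conj (g.coeff 0) = g.coeff 0 := Complex.conj_eq_iff_im.2 hg₀
  have hrel : C (f.coeff 0) * g + C (g.coeff 0) * f = 0 := by
    refine eq_zero_of_infinite_isRoot _ ((infinite_of_mem_nhds 0
      (isOpen_ball.mem_nhds hmem)).mono fun z hz => ?_)
    have h := hermForm_reflectPair_add_hermForm_reflectPair hherm hmem hz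
    simpa [hermForm, reflectPair, hf_star, hg_star, ← coeff_zero_eq_eval_zero, hfconj, hgconj]
      using h
  have hf_ne : f.coeff 0 ≠ 0 := fun h => by
    have := hpos 0 hmem
    rw [hermForm_self] at this
    simp [reflectPair, hf_star, ← coeff_zero_eq_eval_zero, h] at this
  have hg_zero : g.coeff 0 = 0 := by
    have h := congrArg (coeff · 0) hrel
    simp only [coeff_add, coeff_C_mul, coeff_zero] at h
    have : 2 * f.coeff 0 * g.coeff 0 = 0 := by linear_combination h
    simpa [hf_ne] using this
  simpa [hg_zero, hf_ne] using hrel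

variable {ι : Type*} [Fintype ι] {a : ι → ℂ} {r : ℝ}

lemma re_hermForm_reflectPair_smul_blaschkeDenom_pos (hr : r ≠ 0) (ha : ∀ j, ‖a j‖ < 1)
    (hz : ‖z‖ < 1) :
    0 < (hermForm (reflectPair (Fintype.card ι + 1) (r • blaschkeDenom a) z)
      (reflectPair (Fintype.card ι + 1) (r • blaschkeDenom a) z)).re := by
  rw [hermForm_self, Complex.ofReal_re, sub_pos, sq_lt_sq₀ (norm_nonneg _) (norm_nonneg _),
    reflectPair_smul, Prod.smul_fst, Prod.smul_snd, norm_smul, norm_smul]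
  refine mul_lt_mul_of_pos_left ?_ (norm_pos_iff.2 hr)
  have hle := norm_eval_conjReflect_blaschkeDenom_le (fun j => (ha j).le) hz.le
  rw [reflectPair, conjReflect_succ (natDegree_blaschkeDenom_le a), eval_mul, eval_X, norm_mul]
  exact (mul_le_mul_of_nonneg_left hle (norm_nonneg z)).trans_lt
    (mul_lt_of_lt_one_left (norm_pos_iff.2 (eval_blaschkeDenom_ne_zero ha hz.le)) hz)

lemma sq_norm_eval_le_circleForm_smul_blaschkeDenom (r : ℝ) (ha : ∀ j, ‖a j‖ ≤ 1)
    (hz : ‖z‖ = 1) : ‖(r • blaschkeDenom a).eval z‖ ^ 2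
      ≤ circleForm (Fintype.card ι + 1) z (r • blaschkeDenom a) (r • blaschkeDenom a) := by
  rw [circleForm_succ_self, le_add_iff_nonneg_right, map_smul, map_smul, LinearMap.smul_apply,
    smul_smul, smul_eq_mul]
  exact mul_nonneg (mul_self_nonneg r) (circleForm_blaschkeDenom_nonneg ha hz)

theorem eq_zero_of_polarWronskian_smul_blaschkeDenom_eq_zero (hr : r ≠ 0) (ha : ∀ j, ‖a j‖ < 1)
    (hg : g.natDegree ≤ Fintype.card ι) (hg₀ : (g.coeff 0).im = 0)
    (h : polarWronskian (Fintype.card ι + 1) (r • blaschkeDenom a) g = 0) : g = 0 := by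
  refine eq_zero_of_polarWronskian_eq_zero
    ((natDegree_smul_le _ _).trans (natDegree_blaschkeDenom_le a)) hg ?_ hg₀
    (fun z hz => re_hermForm_reflectPair_smul_blaschkeDenom_pos hr ha (mem_ball_zero_iff.1 hz))
    (fun z hz => ?_) h
  · simp [coeff_zero_eq_eval_zero, eval_blaschkeDenom]
  · have hne : (r • blaschkeDenom a).eval z ≠ 0 := by
      rw [eval_smul]
      exact smul_ne_zero hr (eval_blaschkeDenom_ne_zero ha hz.le)
    exact ((pow_pos (norm_pos_iff.2 hne) 2).trans_le
      (sq_norm_eval_le_circleForm_smul_blaschkeDenom r (fun j => (ha j).le) hz)).ne'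

end InfinitesimalUniqueness

section Interpolation

variable {n : ℕ} {f g : ℂ[X]} {z : ℂ}

lemma eval_polarWronskian (hf : f.natDegree ≤ n) (hg : g.natDegree ≤ n) (hz : ‖z‖ = 1) :
    (polarWronskian (n + 1) f g).eval z = z ^ n * (2 * circleForm (n + 1) z f g : ℝ) := by
  have hz₀ : z ≠ 0 := norm_pos_iff.1 (hz ▸ one_pos)
  refine mul_left_cancel₀ hz₀ ?_
  rw [mul_eval_polarWronskian (hf.trans n.le_succ) (hg.trans n.le_succ) hz, pow_succ']
  ring

lemma natDegree_wronskian_conjReflect_le (hf : f.natDegree ≤ n) (hg : g.natDegree ≤ n) :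
    (wronskian f (conjReflect (n + 1) g)).natDegree ≤ 2 * n := by
  by_cases h : wronskian f (conjReflect (n + 1) g) = 0
  · simp [h]
  · have := natDegree_wronskian_lt_add h
    have := natDegree_conjReflect_le (hg.trans n.le_succ)
    lia

lemma natDegree_polarWronskian_le (hf : f.natDegree ≤ n) (hg : g.natDegree ≤ n) :
    (polarWronskian (n + 1) f g).natDegree ≤ 2 * n :=
  natDegree_add_le_of_degree_le (natDegree_wronskian_conjReflect_le hf hg)
    (natDegree_wronskian_conjReflect_le hg hf)

/-- The polynomial `2 ∏ j, (X - b j) (1 - conj (b j) X)`, the value of `polarWronskian (n + 1) f f`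
when the Blaschke product `conjReflect (n + 1) f / f` has the critical points `b j`. -/
noncomputable def criticalPoly (b : Fin n → ℂ) : ℂ[X] :=
  2 * ∏ j, ((X - C (b j)) * (1 - C (conj (b j)) * X))

lemma eval_criticalPoly (b : Fin n → ℂ) (hz : ‖z‖ = 1) :
    (criticalPoly b).eval z = z ^ n * (2 * ∏ j, ‖z - b j‖ ^ 2 : ℝ) := by
  have hzz : conj z * z = 1 := by simp [Complex.conj_mul', hz]
  have hfactor (j : Fin n) : (z - b j) * (1 - conj (b j) * z) = z * (‖z - b j‖ : ℂ) ^ 2 := by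
    rw [← Complex.conj_mul', map_sub]
    linear_combination -(z - b j) * hzz
  have hprod : ∏ j, ((z - b j) * (1 - conj (b j) * z)) = z ^ n * ∏ j, (‖z - b j‖ : ℂ) ^ 2 := by
    simp_rw [hfactor, Finset.prod_mul_distrib, Finset.prod_const, Finset.card_univ,
      Fintype.card_fin]
  simp only [criticalPoly, eval_mul, eval_prod, eval_sub, eval_X, eval_C, eval_one, eval_ofNat,
    hprod]
  push_cast
  ring

lemma natDegree_criticalPoly_le (b : Fin n → ℂ) : (criticalPoly b).natDegree ≤ 2 * n := by
  have hfactor (j : Fin n) : ((X - C (b j)) * (1 - C (conj (b j)) * X)).natDegree ≤ 2 :=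
    natDegree_mul_le_of_le (natDegree_X_sub_C_le _) (natDegree_one_sub_C_mul_X_le _)
  refine (natDegree_C_mul_le (2 : ℂ) _).trans ((natDegree_prod_le _ _).trans ?_)
  refine (Finset.sum_le_sum fun j _ => hfactor j).trans_eq ?_
  rw [Finset.sum_const, Finset.card_univ, Fintype.card_fin, smul_eq_mul, mul_comm]

lemma polarWronskian_self_eq_criticalPoly {s : Finset ℂ} {b : Fin n → ℂ} (hs : ∀ z ∈ s, ‖z‖ = 1)
    (hcard : 2 * n < s.card) (hf : f.natDegree ≤ n)
    (h : ∀ z ∈ s, circleForm (n + 1) z f f = ∏ j, ‖z - b j‖ ^ 2) :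
    polarWronskian (n + 1) f f = criticalPoly b := by
  have hlt {p : ℂ[X]} (hp : p.natDegree ≤ 2 * n) : p.degree < s.card :=
    (degree_le_of_natDegree_le hp).trans_lt (by exact_mod_cast hcard)
  refine eq_of_degrees_lt_of_eval_finset_eq s (hlt (natDegree_polarWronskian_le hf hf))
    (hlt (natDegree_criticalPoly_le b)) fun z hz => ?_
  rw [eval_polarWronskian hf hf (hs z hz), eval_criticalPoly b (hs z hz), h z hz]

lemma circleForm_self_eq_of_polarWronskian_self_eq {b : Fin n → ℂ} (hf : f.natDegree ≤ n)
    (h : polarWronskian (n + 1) f f = criticalPoly b) (hz : ‖z‖ = 1) :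
    circleForm (n + 1) z f f = ∏ j, ‖z - b j‖ ^ 2 := by
  have hz₀ : z ≠ 0 := norm_pos_iff.1 (hz ▸ one_pos)
  have heval := congrArg (eval z) h
  rw [eval_polarWronskian hf hf hz, eval_criticalPoly b hz] at heval
  exact mul_left_cancel₀ two_ne_zero
    (Complex.ofReal_injective (mul_left_cancel₀ (pow_ne_zero n hz₀) heval))

end Interpolation

section Openness

lemma map_nhds_diag_eq_of_injective {E F : Type*} [NormedAddCommGroup E] [NormedSpace ℝ E]
    [FiniteDimensional ℝ E] [NormedAddCommGroup F] [NormedSpace ℝ F] [FiniteDimensional ℝ F]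
    {B : E →ₗ[ℝ] E →ₗ[ℝ] F} (hB : ∀ x y, B x y = B y x) {e : E}
    (hinj : Function.Injective (B e)) (hdim : Module.finrank ℝ E = Module.finrank ℝ F) :
    map (fun x => B x x) (𝓝 e) = 𝓝 (B e e) := by
  let Bc : E →L[ℝ] E →L[ℝ] F := LinearMap.toContinuousBilinearMap B
  have hderiv : HasStrictFDerivAt (fun x => B x x) (2 • Bc e) e := by
    have h := (Bc.hasStrictFDerivAt_of_bilinear (hasStrictFDerivAt_id e) (hasStrictFDerivAt_id e))
    refine h.congr_fderiv ?_
    ext y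
    simp [Bc, two_smul, hB y e]
  refine hderiv.map_nhds_eq_of_surj (LinearMap.range_eq_top.2 fun y => ?_)
  obtain ⟨x, hx⟩ := (LinearMap.injective_iff_surjective_of_finrank_eq_finrank hdim).1 hinj y
  exact ⟨(2 : ℝ)⁻¹ • x, by simp [Bc, hx, ← ofNat_smul_eq_nsmul ℝ]⟩

/-- The polynomial `t + ∑ i, v i X ^ (i + 1)`: real-linear coordinates on the polynomials of degree
at most `n` with real constant term. -/
noncomputable def polyOfCoeffs (n : ℕ) : (Fin n → ℂ) × ℝ →ₗ[ℝ] ℂ[X] :=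
  ((LinearMap.mulLeft ℝ X) ∘ₗ (Polynomial.ofFn n).restrictScalars ℝ).coprod
    (LinearMap.toSpanSingleton ℝ ℂ[X] 1)

variable {n : ℕ}

lemma polyOfCoeffs_apply (e : (Fin n → ℂ) × ℝ) :
    polyOfCoeffs n e = X * Polynomial.ofFn n e.1 + C (e.2 : ℂ) := by
  simp [polyOfCoeffs, LinearMap.toSpanSingleton_apply, Algebra.smul_def, Complex.coe_algebraMap]

lemma natDegree_polyOfCoeffs_le (e : (Fin n → ℂ) × ℝ) : (polyOfCoeffs n e).natDegree ≤ n := by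
  rw [polyOfCoeffs_apply, natDegree_add_C]
  rcases n.eq_zero_or_pos with rfl | hn
  · simp [Polynomial.ofFn_zero']
  · have := ofFn_natDegree_lt hn e.1
    have := natDegree_mul_le (p := X) (q := ofFn n e.1)
    have := natDegree_X_le (R := ℂ)
    lia

lemma coeff_zero_polyOfCoeffs (e : (Fin n → ℂ) × ℝ) : (polyOfCoeffs n e).coeff 0 = e.2 := by
  simp [polyOfCoeffs_apply]

lemma polyOfCoeffs_injective : Function.Injective (polyOfCoeffs n) := by
  intro e e' h
  have h₂ : e.2 = e'.2 := by
    simpa [coeff_zero_polyOfCoeffs] using congrArg (coeff · 0) h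
  have h₁ : X * ofFn n e.1 = X * ofFn n e'.1 := by
    simpa [polyOfCoeffs_apply, h₂] using h
  exact Prod.ext (injective_ofFn n (mul_left_cancel₀ X_ne_zero h₁)) h₂

lemma exists_polyOfCoeffs_eq {f : ℂ[X]} (hf : f.natDegree ≤ n) (h₀ : (f.coeff 0).im = 0) :
    ∃ e, polyOfCoeffs n e = f := by
  refine ⟨(toFn n f.divX, (f.coeff 0).re), ?_⟩
  have hre : (((f.coeff 0).re : ℝ) : ℂ) = f.coeff 0 := Complex.ext rfl (by simp [h₀])
  have hofFn : ofFn n (toFn n f.divX) = f.divX := by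
    rcases n.eq_zero_or_pos with rfl | hn
    · rw [divX_eq_zero_iff.2 (eq_C_of_natDegree_le_zero hf)]
      simp
    · refine ofFn_comp_toFn_eq_id_of_natDegree_lt ?_
      rw [natDegree_divX_eq_natDegree_tsub_one]
      lia
  rw [polyOfCoeffs_apply, hofFn, hre, mul_comm, divX_mul_X_add]

lemma continuous_eval_polyOfCoeffs :
    Continuous fun p : ((Fin n → ℂ) × ℝ) × ℂ => (polyOfCoeffs n p.1).eval p.2 := by
  simp only [polyOfCoeffs_apply, ofFn_eq_sum_monomial, eval_add, eval_mul, eval_X, eval_C,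
    eval_finsetSum, eval_monomial]
  fun_prop

lemma eventually_eval_polyOfCoeffs_ne_zero {e : (Fin n → ℂ) × ℝ}
    (h : ∀ z, ‖z‖ ≤ 1 → (polyOfCoeffs n e).eval z ≠ 0) :
    ∀ᶠ e' in 𝓝 e, ∀ z, ‖z‖ ≤ 1 → (polyOfCoeffs n e').eval z ≠ 0 := by
  simp only [← mem_closedBall_zero_iff] at h ⊢
  exact (isCompact_closedBall _ _).eventually_forall_of_forall_eventually fun z hz =>
    continuous_eval_polyOfCoeffs.continuousAt.eventually_ne (h z hz)

lemma exists_finset_norm_eq_one_card_eq (m : ℕ) :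
    ∃ s : Finset ℂ, s.card = m ∧ ∀ z ∈ s, ‖z‖ = 1 := by
  have hinf : (sphere (0 : ℂ) 1).Infinite := by
    have : (sphere (0 : ℂ) 1).Nontrivial := ⟨1, by simp, -1, by simp, by norm_num⟩
    exact (isPreconnected_sphere (by simp) 0 1).infinite_of_nontrivial this
  obtain ⟨s, hs, hcard⟩ := hinf.exists_subset_card_eq m
  exact ⟨s, hcard, fun z hz => by simpa using hs hz⟩

/-- The family of forms `circleForm (n + 1) k`, for `k` in a set `s` of nodes, in the coordinates
of `polyOfCoeffs`. With `2 n + 1` nodes on the circle, source and target have equal dimension. -/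
noncomputable def nodeForm (n : ℕ) (s : Finset ℂ) :
    (Fin n → ℂ) × ℝ →ₗ[ℝ] (Fin n → ℂ) × ℝ →ₗ[ℝ] (s → ℝ) :=
  LinearMap.mk₂ ℝ (fun e q k => circleForm (n + 1) k (polyOfCoeffs n e) (polyOfCoeffs n q))
    (by intros; ext; simp) (by intros; ext; simp) (by intros; ext; simp) (by intros; ext; simp)

variable {s : Finset ℂ} {e : (Fin n → ℂ) × ℝ} {r : ℝ} {a : Fin n → ℂ}

lemma nodeForm_comm (s : Finset ℂ) (e q : (Fin n → ℂ) × ℝ) :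
    nodeForm n s e q = nodeForm n s q e :=
  funext fun k => circleForm_comm (n + 1) k (polyOfCoeffs n e) (polyOfCoeffs n q)

lemma nodeForm_injective (hs : ∀ z ∈ s, ‖z‖ = 1) (hcard : 2 * n < s.card) (hr : r ≠ 0)
    (ha : ∀ j, ‖a j‖ < 1) (he : polyOfCoeffs n e = r • blaschkeDenom a) :
    Function.Injective (nodeForm n s e) := by
  refine (injective_iff_map_eq_zero _).2 fun q hq => polyOfCoeffs_injective ?_
  have hdeg := natDegree_polarWronskian_le (natDegree_polyOfCoeffs_le e)
    (natDegree_polyOfCoeffs_le q)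
  have hzero : polarWronskian (n + 1) (polyOfCoeffs n e) (polyOfCoeffs n q) = 0 := by
    refine eq_zero_of_degree_lt_of_eval_finset_eq_zero s
      ((degree_le_of_natDegree_le hdeg).trans_lt (by exact_mod_cast hcard)) fun z hz => ?_
    have hform : circleForm (n + 1) z (polyOfCoeffs n e) (polyOfCoeffs n q) = 0 :=
      congrFun hq ⟨z, hz⟩
    rw [eval_polarWronskian (natDegree_polyOfCoeffs_le e) (natDegree_polyOfCoeffs_le q) (hs z hz),
      hform]
    simp
  rw [map_zero]
  refine eq_zero_of_polarWronskian_smul_blaschkeDenom_eq_zero hr ha ?_ ?_ (r := r) (a := a) ?_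
  · simpa using natDegree_polyOfCoeffs_le q
  · simp [coeff_zero_polyOfCoeffs]
  · rw [← he, Fintype.card_fin, hzero]

lemma map_nodeForm_self_nhds (hs : ∀ z ∈ s, ‖z‖ = 1) (hcard : s.card = 2 * n + 1) (hr : r ≠ 0)
    (ha : ∀ j, ‖a j‖ < 1) (he : polyOfCoeffs n e = r • blaschkeDenom a) :
    map (fun e => nodeForm n s e e) (𝓝 e) = 𝓝 (nodeForm n s e e) := by
  refine map_nhds_diag_eq_of_injective (nodeForm_comm s)
    (nodeForm_injective hs (by lia) hr ha he) ?_
  simp only [Module.finrank_prod, Module.finrank_pi_fintype, Module.finrank_self,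
    Complex.finrank_real_complex, Finset.sum_const, Finset.card_univ,
    Fintype.card_fin, Fintype.card_coe, hcard, smul_eq_mul]
  ring

end Openness

section Continuity

variable {n : ℕ} {b : Fin n → ℂ} {r : ℝ} {a : Fin n → ℂ}

/-- The points `b j` of the disk are the critical points of the Blaschke product
`conjReflect (n + 1) f / f` for some `f = r • blaschkeDenom a` with `a` in the disk. The condition
is phrased on the unit circle; `polarWronskian_self_eq_criticalPoly` turns it into the identity
`polarWronskian (n + 1) f f = criticalPoly b`. -/
def IsCriticalConfiguration (b : Fin n → ℂ) : Prop :=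
  ∃ (r : ℝ) (a : Fin n → ℂ), (∀ j, ‖a j‖ < 1) ∧ ∀ z, ‖z‖ = 1 →
    circleForm (n + 1) z (r • blaschkeDenom a) (r • blaschkeDenom a) = ∏ j, ‖z - b j‖ ^ 2

lemma prod_norm_sub_sq_pos (hb : ∀ j, ‖b j‖ < 1) {z : ℂ} (hz : ‖z‖ = 1) :
    0 < ∏ j, ‖z - b j‖ ^ 2 := by
  refine Finset.prod_pos fun j _ => pow_pos (norm_pos_iff.2 (sub_ne_zero.2 ?_)) 2
  rintro rfl
  exact (hb j).ne hz

lemma ne_zero_of_circleForm_self_eq_prod (hb : ∀ j, ‖b j‖ < 1) {z : ℂ} (hz : ‖z‖ = 1)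
    (h : circleForm (n + 1) z (r • blaschkeDenom a) (r • blaschkeDenom a) =
      ∏ j, ‖z - b j‖ ^ 2) : r ≠ 0 := by
  rintro rfl
  simp only [zero_smul, map_zero] at h
  exact (prod_norm_sub_sq_pos hb hz).ne h

lemma isCriticalConfiguration_zero : IsCriticalConfiguration (0 : Fin n → ℂ) := by
  refine ⟨(√(n + 1))⁻¹, 0, by simp, fun z hz => ?_⟩
  have hn : (0 : ℝ) < n + 1 := by positivity
  have hdenom : blaschkeDenom (0 : Fin n → ℂ) = 1 := by simp [blaschkeDenom]
  have hone : circleForm (n + 1) z 1 1 = n + 1 := by simp [circleForm_apply]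
  rw [hdenom, map_smul, map_smul, LinearMap.smul_apply, smul_smul, smul_eq_mul, hone, ← mul_inv,
    Real.mul_self_sqrt hn.le, inv_mul_cancel₀ hn.ne']
  simp [hz]

lemma isCriticalConfiguration_of_circleForm_eq {s : Finset ℂ} {f : ℂ[X]}
    (hs : ∀ z ∈ s, ‖z‖ = 1) (hcard : 2 * n < s.card) (hf : f.natDegree ≤ n)
    (hf₀ : (f.coeff 0).im = 0) (hne : ∀ z, ‖z‖ ≤ 1 → f.eval z ≠ 0)
    (h : ∀ z ∈ s, circleForm (n + 1) z f f = ∏ j, ‖z - b j‖ ^ 2) : IsCriticalConfiguration b := by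
  obtain ⟨a, ha, hfa⟩ := exists_eq_C_mul_blaschkeDenom hf hne
  have hsmul : f = (f.coeff 0).re • blaschkeDenom a := by
    conv_lhs => rw [hfa, ← Complex.re_add_im (f.coeff 0), hf₀]
    simp [Algebra.smul_def]
  refine ⟨(f.coeff 0).re, a, ha, fun z hz => ?_⟩
  rw [← hsmul]
  exact circleForm_self_eq_of_polarWronskian_self_eq hf
    (polarWronskian_self_eq_criticalPoly hs hcard hf h) hz

lemma IsCriticalConfiguration.eventually (hb : ∀ j, ‖b j‖ < 1) (h : IsCriticalConfiguration b) :
    ∀ᶠ b' in 𝓝 b, IsCriticalConfiguration b' := by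
  obtain ⟨r, a, ha, hprofile⟩ := h
  have hr : r ≠ 0 := ne_zero_of_circleForm_self_eq_prod hb norm_one (hprofile 1 norm_one)
  obtain ⟨e, he⟩ : ∃ e, polyOfCoeffs n e = r • blaschkeDenom a :=
    exists_polyOfCoeffs_eq
      ((natDegree_smul_le _ _).trans (by simpa using natDegree_blaschkeDenom_le a))
      (by simp [coeff_zero_eq_eval_zero, eval_blaschkeDenom])
  obtain ⟨s, hcard, hs⟩ := exists_finset_norm_eq_one_card_eq (2 * n + 1)
  let T (b' : Fin n → ℂ) (k : s) : ℝ := ∏ j, ‖(k : ℂ) - b' j‖ ^ 2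
  have hT : Continuous T := by fun_prop
  have hTb : nodeForm n s e e = T b := by
    ext k
    calc nodeForm n s e e k
        = circleForm (n + 1) k (r • blaschkeDenom a) (r • blaschkeDenom a) := by rw [← he]; rfl
      _ = T b k := hprofile k (hs k k.2)
  have hne : ∀ᶠ e' in 𝓝 e, ∀ z, ‖z‖ ≤ 1 → (polyOfCoeffs n e').eval z ≠ 0 := by
    refine eventually_eval_polyOfCoeffs_ne_zero fun z hz => ?_
    rw [he, eval_smul]
    exact smul_ne_zero hr (eval_blaschkeDenom_ne_zero ha hz)
  have himage := image_mem_map (m := fun e => nodeForm n s e e) hne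
  rw [map_nodeForm_self_nhds hs hcard hr ha he, hTb] at himage
  filter_upwards [hT.continuousAt himage] with b' ⟨e', hne', he'⟩
  exact isCriticalConfiguration_of_circleForm_eq hs (by lia) (natDegree_polyOfCoeffs_le e')
    (by simp [coeff_zero_polyOfCoeffs]) hne' fun z hz => congrFun he' ⟨z, hz⟩

lemma abs_le_two_pow_of_circleForm_self_eq_prod (hb : ∀ j, ‖b j‖ ≤ 1) (ha : ∀ j, ‖a j‖ ≤ 1)
    (h : ∀ z, ‖z‖ = 1 → circleForm (n + 1) z (r • blaschkeDenom a) (r • blaschkeDenom a) =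
      ∏ j, ‖z - b j‖ ^ 2) : |r| ≤ 2 ^ n := by
  have hcircle (z : ℂ) (hz : ‖z‖ = 1) : ‖(r • blaschkeDenom a).eval z‖ ≤ 2 ^ n := by
    refine (sq_le_sq₀ (norm_nonneg _) (by positivity)).1 ?_
    calc ‖(r • blaschkeDenom a).eval z‖ ^ 2
        ≤ circleForm (n + 1) z (r • blaschkeDenom a) (r • blaschkeDenom a) := by
          simpa using sq_norm_eval_le_circleForm_smul_blaschkeDenom r ha hz
      _ = ∏ j, ‖z - b j‖ ^ 2 := h z hz
      _ ≤ ∏ _j : Fin n, 2 ^ 2 := by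
          refine Finset.prod_le_prod (fun j _ => by positivity) fun j _ => ?_
          refine pow_le_pow_left₀ (norm_nonneg _) ((norm_sub_le _ _).trans ?_) 2
          linarith [hb j]
      _ = (2 ^ n) ^ 2 := by
          rw [Finset.prod_const, Finset.card_univ, Fintype.card_fin, pow_right_comm]
  have hmax : ‖(r • blaschkeDenom a).eval 0‖ ≤ 2 ^ n := by
    refine Complex.norm_le_of_forall_mem_frontier_norm_le (U := ball 0 1) isBounded_ball
      (Polynomial.differentiable _).diffContOnCl (fun z hz => hcircle z ?_)
      (subset_closure (mem_ball_self one_pos))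
    simpa [frontier_ball] using hz
  simpa [eval_blaschkeDenom] using hmax

lemma continuous_eval_derivative_blaschkeDenom (z : ℂ) :
    Continuous fun a : Fin n → ℂ => (derivative (blaschkeDenom a)).eval z := by
  simp only [blaschkeDenom, derivative_prod_finset, derivative_sub, derivative_one,
    derivative_C_mul_X, zero_sub, eval_finsetSum, eval_prod, eval_mul, eval_neg, eval_sub,
    eval_one, eval_C, eval_X]
  fun_prop

lemma continuous_circleForm_smul_blaschkeDenom (N : ℕ) (z : ℂ) :
    Continuous fun p : ℝ × (Fin n → ℂ) =>
      circleForm N z (p.1 • blaschkeDenom p.2) (p.1 • blaschkeDenom p.2) := by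
  have hderiv : Continuous fun p : ℝ × (Fin n → ℂ) => (derivative (blaschkeDenom p.2)).eval z :=
    (continuous_eval_derivative_blaschkeDenom z).comp continuous_snd
  simp only [circleForm_apply, derivative_smul, eval_smul, eval_blaschkeDenom]
  fun_prop

lemma isCriticalConfiguration_of_mem_closure (hb : ∀ j, ‖b j‖ < 1)
    (h : b ∈ closure {b' | (∀ j, ‖b' j‖ < 1) ∧ IsCriticalConfiguration b'}) :
    IsCriticalConfiguration b := by
  let T (b' : Fin n → ℂ) (z : sphere (0 : ℂ) 1) : ℝ := ∏ j, ‖(z : ℂ) - b' j‖ ^ 2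
  let Ψ (p : ℝ × (Fin n → ℂ)) (z : sphere (0 : ℂ) 1) : ℝ :=
    circleForm (n + 1) z (p.1 • blaschkeDenom p.2) (p.1 • blaschkeDenom p.2)
  let K : Set (ℝ × (Fin n → ℂ)) := closedBall 0 (2 ^ n) ×ˢ closedBall 0 1
  have hT : Continuous T := by fun_prop
  have hΨ : Continuous Ψ := continuous_pi fun z => continuous_circleForm_smul_blaschkeDenom _ _
  have hK : IsCompact K := (isCompact_closedBall _ _).prod (isCompact_closedBall _ _)
  have hclosed : IsClosed (T ⁻¹' (Ψ '' K)) := (hK.image hΨ).isClosed.preimage hT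
  obtain ⟨⟨r, a⟩, ⟨-, ha⟩, hra⟩ : b ∈ T ⁻¹' (Ψ '' K) := by
    refine closure_minimal ?_ hclosed h
    rintro b' ⟨hb', r, a, ha, hprofile⟩
    refine ⟨(r, a), ⟨?_, ?_⟩, funext fun z => hprofile z (by simp)⟩
    · simpa using abs_le_two_pow_of_circleForm_self_eq_prod (fun j => (hb' j).le)
        (fun j => (ha j).le) hprofile
    · simpa [pi_norm_le_iff_of_nonneg] using fun j => (ha j).le
  have hprofile (z : ℂ) (hz : ‖z‖ = 1) :
      circleForm (n + 1) z (r • blaschkeDenom a) (r • blaschkeDenom a) = ∏ j, ‖z - b j‖ ^ 2 :=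
    congrFun hra ⟨z, by simpa using hz⟩
  refine ⟨r, a, fun j => lt_of_le_of_ne ?_ fun haj => ?_, hprofile⟩
  · exact (norm_le_pi_norm a j).trans (by simpa using ha)
  · have hzero : (r • blaschkeDenom a).eval (a j) = 0 := by
      rw [eval_smul, eval_blaschkeDenom_self haj, smul_zero]
    exact (prod_norm_sub_sq_pos hb haj).ne
      ((circleForm_self_eq_zero _ hzero).symm.trans (hprofile _ haj))

theorem isCriticalConfiguration_of_norm_lt_one (hb : ∀ j, ‖b j‖ < 1) :
    IsCriticalConfiguration b := by
  let u : Set (Fin n → ℂ) := {b | (∀ j, ‖b j‖ < 1) ∧ IsCriticalConfiguration b}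
  have mem_ball_iff (b : Fin n → ℂ) : b ∈ ball 0 1 ↔ ∀ j, ‖b j‖ < 1 := by
    simp [pi_norm_lt_iff]
  have hopen : IsOpen u := by
    refine isOpen_iff_mem_nhds.2 fun b ⟨hb, hcrit⟩ => ?_
    filter_upwards [isOpen_ball.mem_nhds ((mem_ball_iff b).2 hb), hcrit.eventually hb]
      with b' hb' hcrit' using ⟨(mem_ball_iff b').1 hb', hcrit'⟩
  have hsub : ball (0 : Fin n → ℂ) 1 ⊆ u := by
    refine (convex_ball 0 1).isPreconnected.subset_of_closure_inter_subset hopen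
      ⟨0, mem_ball_self one_pos, by simp, isCriticalConfiguration_zero⟩ ?_
    rintro b ⟨hclosure, hb⟩
    have hb := (mem_ball_iff b).1 hb
    exact ⟨hb, isCriticalConfiguration_of_mem_closure hb hclosure⟩
  exact (hsub ((mem_ball_iff b).2 hb)).2

end Continuity

section CriticalPoints

lemma vOrder_eq_analyticOrderAt {f : ℂ → ℂ} {z : ℂ} (hf : AnalyticAt ℂ f z) :
    vOrder f z = analyticOrderAt f z := by
  refine ENat.eq_of_forall_natCast_le_iff fun m => ?_
  rw [natCast_le_analyticOrderAt_iff_iteratedDeriv_eq_zero hf, vOrder, le_sInf_iff]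
  simp only [Set.forall_mem_image, Set.mem_ofPred_eq, Nat.cast_le]
  exact forall_congr' fun i => by rw [← not_lt, not_imp_not]

lemma analyticOrderAt_prod {ι : Type*} (s : Finset ι) {f : ι → ℂ → ℂ} {z : ℂ}
    (hf : ∀ i, AnalyticAt ℂ (f i) z) :
    analyticOrderAt (∏ i ∈ s, f i) z = ∑ i ∈ s, analyticOrderAt (f i) z := by
  classical
  induction s using Finset.induction_on with
  | empty => simp [analyticAt_const.analyticOrderAt_eq_zero.2, Pi.one_def]
  | insert i s hi ih =>
    rw [Finset.prod_insert hi, Finset.sum_insert hi,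
      analyticOrderAt_mul (hf i) (s.analyticAt_prod fun i _ => hf i), ih]

variable {n : ℕ} {b : Fin n → ℂ} {w : ℂ}

lemma analyticOrderAt_prod_sub (b : Fin n → ℂ) (w : ℂ) :
    analyticOrderAt (∏ j, fun z => z - b j) w = Set.ncard {j | b j = w} := by
  have horder (j : Fin n) : analyticOrderAt (fun z => z - b j) w = if b j = w then 1 else 0 := by
    split_ifs with h
    · rw [← h]
      exact analyticOrderAt_id_sub_const_self
    · exact analyticOrderAt_id_sub_const_of_ne (Ne.symm h)
  rw [analyticOrderAt_prod _ fun j => by fun_prop, Finset.sum_congr rfl fun j _ => horder j,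
    Finset.sum_boole, ← Set.ncard_coe_finset]
  simp

lemma analyticOrderAt_criticalPoly_div (hb : ∀ j, ‖b j‖ < 1) (hw : ‖w‖ < 1) {h : ℂ → ℂ}
    (hh : AnalyticAt ℂ h w) (h₀ : h w ≠ 0) :
    analyticOrderAt (fun z => (criticalPoly b).eval z / h z) w = Set.ncard {j | b j = w} := by
  let unit (z : ℂ) : ℂ := 2 * (∏ j, (1 - conj (b j) * z)) / h z
  have hfactor : (fun z => (criticalPoly b).eval z / h z) = (∏ j, fun z => z - b j) * unit := by
    ext z
    simp only [criticalPoly, eval_mul, eval_ofNat, eval_prod, eval_sub, eval_one, eval_C, eval_X,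
      Finset.prod_mul_distrib, Pi.mul_apply, Finset.prod_apply, unit]
    ring
  have hunit : AnalyticAt ℂ unit w := by
    have : AnalyticAt ℂ (fun z => 2 * ∏ j, (1 - conj (b j) * z)) w := by fun_prop
    exact this.div hh h₀
  have hunit₀ : unit w ≠ 0 := div_ne_zero (mul_ne_zero two_ne_zero
    (Finset.prod_ne_zero_iff.2 fun j _ => one_sub_conj_mul_ne_zero (hb j) hw.le)) h₀
  rw [hfactor, analyticOrderAt_mul (Finset.univ.analyticAt_prod fun j _ => by fun_prop) hunit,
    analyticOrderAt_prod_sub, hunit.analyticOrderAt_eq_zero.2 hunit₀, add_zero]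

lemma hasDerivAt_conjReflect_div {N : ℕ} {f : ℂ[X]} {z : ℂ} (hz : f.eval z ≠ 0) :
    HasDerivAt (fun z => (conjReflect N f).eval z / f.eval z)
      ((polarWronskian N f f).eval z / (2 * f.eval z ^ 2)) z := by
  refine (((conjReflect N f).hasDerivAt z).div (f.hasDerivAt z) hz).congr_deriv ?_
  simp only [polarWronskian, wronskian, eval_add, eval_sub, eval_mul]
  field_simp
  ring

lemma neg_one_pow_mul_prod_blaschke {ι : Type*} [Fintype ι] (a : ι → ℂ) (z : ℂ) :
    (-1) ^ Fintype.card ι * ∏ j, (a j - z) / (1 - conj (a j) * z)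
      = (conjReflect (Fintype.card ι) (blaschkeDenom a)).eval z / (blaschkeDenom a).eval z := by
  rw [conjReflect_blaschkeDenom, eval_blaschkeDenom, eval_prod, Finset.prod_div_distrib,
    ← Finset.card_univ, ← Finset.prod_const, ← mul_div_assoc, ← Finset.prod_mul_distrib]
  simp

lemma conjReflect_smul_div_smul {r : ℝ} (hr : r ≠ 0) (N : ℕ) (f : ℂ[X]) (z : ℂ) :
    (conjReflect N (r • f)).eval z / (r • f).eval z = (conjReflect N f).eval z / f.eval z := by
  rw [conjReflect_smul, eval_smul, eval_smul, Complex.real_smul, Complex.real_smul,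
    mul_div_mul_left _ _ (Complex.ofReal_ne_zero.2 hr)]

lemma IsCriticalConfiguration.exists_polarWronskian_eq (hb : ∀ j, ‖b j‖ < 1)
    (h : IsCriticalConfiguration b) :
    ∃ (r : ℝ) (a : Fin n → ℂ), r ≠ 0 ∧ (∀ j, ‖a j‖ < 1) ∧
      polarWronskian (n + 1) (r • blaschkeDenom a) (r • blaschkeDenom a) = criticalPoly b := by
  obtain ⟨r, a, ha, hprofile⟩ := h
  obtain ⟨s, hcard, hs⟩ := exists_finset_norm_eq_one_card_eq (2 * n + 1)
  have hdeg : (r • blaschkeDenom a).natDegree ≤ n :=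
    (natDegree_smul_le _ _).trans (by simpa using natDegree_blaschkeDenom_le a)
  exact ⟨r, a, ne_zero_of_circleForm_self_eq_prod hb norm_one (hprofile 1 norm_one), ha,
    polarWronskian_self_eq_criticalPoly hs (by lia) hdeg fun z hz => hprofile z (hs z hz)⟩

lemma vOrder_deriv_conjReflect_div {N : ℕ} {f : ℂ[X]} (hb : ∀ j, ‖b j‖ < 1) (hw : ‖w‖ < 1)
    (hf : f.eval w ≠ 0) (h : polarWronskian N f f = criticalPoly b) :
    vOrder (deriv fun z => (conjReflect N f).eval z / f.eval z) w = Set.ncard {j | b j = w} := by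
  have hderiv : deriv (fun z => (conjReflect N f).eval z / f.eval z)
      =ᶠ[𝓝 w] fun z => (criticalPoly b).eval z / (2 * f.eval z ^ 2) := by
    filter_upwards [f.continuous.continuousAt.eventually_ne hf] with z hz
    rw [(hasDerivAt_conjReflect_div hz).deriv, h]
  have hanalytic (p : ℂ[X]) : AnalyticAt ℂ (fun z => p.eval z) w := p.differentiable.analyticAt w
  have hquotient := ((hanalytic (conjReflect N f)).fun_div (hanalytic f) hf).deriv
  rw [vOrder_eq_analyticOrderAt hquotient, analyticOrderAt_congr hderiv]
  exact analyticOrderAt_criticalPoly_div hb hw (analyticAt_const.fun_mul ((hanalytic f).fun_pow 2))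
    (mul_ne_zero two_ne_zero (pow_ne_zero 2 hf))

end CriticalPoints

end Heins

/-- **Heins' theorem (existence).** Given points `c 0, …, c (n-1)` (not necessarily
distinct) in the open unit disk, there is a finite Blaschke product
`B(z) = η ∏_{j=1}^{n+1} (z_j − z)/(1 − conj z_j · z)` of degree `n + 1` whose
derivative vanishes in the disk exactly at the points `c j`, counted with
multiplicity, and nowhere else. -/
theorem heins_existence (n : ℕ) (c : Fin n → ℂ) (hc : ∀ j, ‖c j‖ < 1) :
    ∃ (η : ℂ) (a : Fin (n + 1) → ℂ), ‖η‖ = 1 ∧ (∀ j, ‖a j‖ < 1) ∧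
      ∀ w ∈ Metric.ball (0 : ℂ) 1,
        vOrder
          (deriv (fun z : ℂ => η * ∏ j, (a j - z) / (1 - (starRingEnd ℂ) (a j) * z))) w
          = (Set.ncard {j : Fin n | c j = w} : ℕ∞) := by
  obtain ⟨r, a, hr, ha, hcrit⟩ :=
    (isCriticalConfiguration_of_norm_lt_one hc).exists_polarWronskian_eq hc
  let a₀ : Fin (n + 1) → ℂ := Fin.cons 0 a
  have hdenom : blaschkeDenom a₀ = blaschkeDenom a := by simp [a₀, blaschkeDenom_cons]
  have hB (z : ℂ) : (-1) ^ (n + 1) * ∏ j, (a₀ j - z) / (1 - (starRingEnd ℂ) (a₀ j) * z)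
      = (conjReflect (n + 1) (r • blaschkeDenom a)).eval z / (r • blaschkeDenom a).eval z := by
    rw [conjReflect_smul_div_smul hr, ← hdenom]
    simpa using neg_one_pow_mul_prod_blaschke a₀ z
  refine ⟨(-1) ^ (n + 1), a₀, by simp, Fin.cases (by simp [a₀]) ha, fun w hw => ?_⟩
  have hw : ‖w‖ < 1 := by simpa using hw
  have hne : (r • blaschkeDenom a).eval w ≠ 0 := by
    rw [Polynomial.eval_smul]
    exact smul_ne_zero hr (eval_blaschkeDenom_ne_zero ha hw.le)
  simp only [hB]
  exact vOrder_deriv_conjReflect_div hc hw hne hcrit
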